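/- arXiv:2006.15221 — 3 statements merged into one kernel-verified Lean document; each statement's English description precedes it below -/
import Mathlib

section
/- Let (G,K) be a connected finite weighted graph, let φ : G → ℝ satisfy Σ_g φ(g) = 0, and let S : G × G → [0,∞) be symmetric and strictly positive whenever K(g,g') > 0. Then there exists a unique η : G → ℝ with Σ_g η(g) = 0 solving the graph PDE div_g(∇_g η · S) = φ, where (∇_g η · S)(g,g') := (η(g') − η(g)) S(g,g'). Moreover Σ_{g,g'} |η(g') − η(g)|² S(g,g') K(g,g') ≤ (1/λ_S) Σ_g |φ(g)|², where λ_S is the first nonzero eigenvalue of the matrix L_S with entries L_S(g,g') = 1_{g=g'} Σ_{g''} 2 S(g,g'') K(g,g'') − 2 S(g,g') K(g,g'). -/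
/-!
The PDE reads `L_S η = -φ`. Symmetrizing the double sum shows that `⟨v, L_S v⟩` is the energy
`∑ (v g' - v g)² S K`, so `L_S` is positive semidefinite and, by connectivity, its kernel consists
of the constant functions. It also maps into the mean-zero functions, on which it is therefore
injective, hence bijective. Every eigenvalue `t` satisfies `t ≤ λ_S⁻¹ t²`, so the functional
calculus gives `L_S ≤ λ_S⁻¹ L_S²`; testing this against `η` is the energy bound.
-/

/-- The graph Laplacian-type matrix `L_S` with entries
`L_S(g,g') = 1_{g=g'} Σ_{g''} 2 S(g,g'') K(g,g'') − 2 S(g,g') K(g,g')`. -/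
noncomputable def graphLaplacian {G : Type*} [Fintype G] [DecidableEq G]
    (K S : G → G → ℝ) : Matrix G G ℝ :=
  Matrix.of fun g g' =>
    (if g = g' then ∑ g'', 2 * S g g'' * K g g'' else 0) - 2 * S g g' * K g g'

/-- The first nonzero eigenvalue of `L_S` (the smallest eigenvalue different from zero). -/
noncomputable def firstNonzeroEigenvalue {G : Type*} [Fintype G] [DecidableEq G]
    (K S : G → G → ℝ) : ℝ :=
  sInf {t : ℝ | t ≠ 0 ∧ ∃ v : G → ℝ, v ≠ 0 ∧ (graphLaplacian K S).mulVec v = t • v}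

section Spectral

open scoped Matrix MatrixOrder

variable {n : Type*} [Fintype n] [DecidableEq n]

-- If `s ⊆ {0}` then `sInf (s \ {0}) = sInf ∅ = 0` is a junk value, but then `t = 0`.
lemma le_inv_sInf_mul_sq {s : Set ℝ} (hs : s.Finite) (hnonneg : ∀ t ∈ s, 0 ≤ t) {t : ℝ}
    (ht : t ∈ s) : t ≤ (sInf (s \ {0}))⁻¹ * t ^ 2 := by
  obtain rfl | ht0 := eq_or_ne t 0
  · simp
  have htmem : t ∈ s \ {0} := ⟨ht, ht0⟩
  have hfin : (s \ {0}).Finite := hs.sdiff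
  obtain ⟨hmin, hmin0⟩ : sInf (s \ {0}) ∈ s \ {0} := Set.Nonempty.csInf_mem ⟨t, htmem⟩ hfin
  have hpos : 0 < sInf (s \ {0}) := (hnonneg _ hmin).lt_of_ne' hmin0
  have hle : sInf (s \ {0}) ≤ t := csInf_le hfin.bddBelow htmem
  rw [inv_mul_eq_div, le_div_iff₀ hpos, sq]
  exact mul_le_mul_of_nonneg_left hle (hnonneg t ht)

lemma le_inv_sInf_spectrum_smul_sq {𝕜 : Type*} [RCLike 𝕜] {A : Matrix n n 𝕜} (hA : 0 ≤ A) :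
    A ≤ (sInf (spectrum ℝ A \ {0}))⁻¹ • A ^ 2 := by
  have hsa : IsSelfAdjoint A := .of_nonneg hA
  set c := (sInf (spectrum ℝ A \ {0}))⁻¹
  calc A = cfc (fun t : ℝ ↦ t) A := (cfc_id' ℝ A).symm
    _ ≤ cfc (fun t : ℝ ↦ c * t ^ 2) A := cfc_mono fun _ ht ↦
      le_inv_sInf_mul_sq A.finite_real_spectrum (fun _ hx ↦ spectrum_nonneg_of_nonneg hA hx) ht
    _ = c • A ^ 2 := by rw [cfc_const_mul .., cfc_pow_id ..]

lemma dotProduct_mulVec_le_inv_sInf_spectrum_mul {A : Matrix n n ℝ} (hA : A.PosSemidef)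
    (v : n → ℝ) :
    v ⬝ᵥ A *ᵥ v ≤ (sInf (spectrum ℝ A \ {0}))⁻¹ * (A *ᵥ v ⬝ᵥ A *ᵥ v) := by
  have hle := Matrix.le_iff.1 (le_inv_sInf_spectrum_smul_sq hA.nonneg)
  have hform := hle.dotProduct_mulVec_nonneg v
  have hsq : v ⬝ᵥ (A ^ 2) *ᵥ v = A *ᵥ v ⬝ᵥ A *ᵥ v := by
    rw [sq, ← Matrix.mulVec_mulVec, Matrix.dotProduct_mulVec, ← Matrix.mulVec_transpose,
      ← Matrix.conjTranspose_eq_transpose_of_trivial, hA.isHermitian.eq]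
  rwa [Matrix.sub_mulVec, dotProduct_sub, Matrix.smul_mulVec, dotProduct_smul, star_trivial, hsq,
    smul_eq_mul, sub_nonneg] at hform

end Spectral

/-- The mean-zero functions on `G`, on which the Laplacian of a connected graph is invertible. -/
def meanZero (G : Type*) [Fintype G] : Submodule ℝ (G → ℝ) :=
  LinearMap.ker (∑ g, LinearMap.proj g)

lemma mem_meanZero {G : Type*} [Fintype G] {v : G → ℝ} : v ∈ meanZero G ↔ ∑ g, v g = 0 := by
  simp [meanZero]

lemma eq_zero_of_mem_meanZero_of_forall_eq {G : Type*} [Fintype G] {v : G → ℝ}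
    (hv : v ∈ meanZero G) (hconst : ∀ a b, v a = v b) : v = 0 := by
  funext g
  have : Nonempty G := ⟨g⟩
  have hsum : Fintype.card G * v g = 0 := by
    simpa [fun a ↦ hconst a g] using mem_meanZero.1 hv
  simpa using hsum

section GraphLaplacian

open scoped Matrix

variable {G : Type*} [Fintype G] [DecidableEq G] {K S : G → G → ℝ}

lemma firstNonzeroEigenvalue_eq_sInf_spectrum :
    firstNonzeroEigenvalue K S = sInf (spectrum ℝ (graphLaplacian K S) \ {0}) := by
  have hspec (t : ℝ) : t ∈ spectrum ℝ (graphLaplacian K S) ↔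
      ∃ v : G → ℝ, v ≠ 0 ∧ graphLaplacian K S *ᵥ v = t • v := by
    rw [← Matrix.spectrum_toLin', ← Module.End.hasEigenvalue_iff_mem_spectrum,
      Module.End.hasEigenvalue_iff, Submodule.ne_bot_iff]
    simp only [Module.End.mem_eigenspace_iff, Matrix.toLin'_apply, and_comm]
  simp only [firstNonzeroEigenvalue, Set.sdiff_eq, Set.inter_def, hspec, Set.mem_compl_iff,
    Set.mem_singleton_iff, and_comm]

lemma graphLaplacian_mulVec_apply (K S : G → G → ℝ) (v : G → ℝ) (g : G) :
    (graphLaplacian K S *ᵥ v) g = ∑ g', 2 * S g g' * K g g' * (v g - v g') := by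
  simp only [graphLaplacian, Matrix.mulVec, dotProduct, Matrix.of_apply, sub_mul, mul_sub,
    Finset.sum_sub_distrib, ite_mul, zero_mul, Finset.sum_ite_eq, Finset.mem_univ, if_true,
    Finset.sum_mul]

lemma div_grad_eq_neg_graphLaplacian_mulVec (K : G → G → ℝ) (hS : ∀ g g', S g g' = S g' g)
    (v : G → ℝ) (g : G) :
    ∑ g', ((v g' - v g) * S g g' - (v g - v g') * S g' g) * K g g' =
      -(graphLaplacian K S *ᵥ v) g := by
  rw [graphLaplacian_mulVec_apply, ← Finset.sum_neg_distrib]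
  refine Finset.sum_congr rfl fun g' _ ↦ ?_
  rw [hS g' g]
  ring

lemma dotProduct_graphLaplacian_mulVec (hSK : ∀ g g', S g g' * K g g' = S g' g * K g' g)
    (v : G → ℝ) :
    v ⬝ᵥ graphLaplacian K S *ᵥ v = ∑ g, ∑ g', (v g' - v g) ^ 2 * (S g g' * K g g') := by
  have hswap : ∑ g, ∑ g', v g * (v g - v g') * (S g g' * K g g') =
      ∑ g, ∑ g', v g' * (v g' - v g) * (S g g' * K g g') := by
    rw [Finset.sum_comm]
    simp only [hSK]
  calc v ⬝ᵥ graphLaplacian K S *ᵥ v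
      = ∑ g, ∑ g', v g * (v g - v g') * (S g g' * K g g') +
          ∑ g, ∑ g', v g * (v g - v g') * (S g g' * K g g') := by
        simp only [dotProduct, graphLaplacian_mulVec_apply, Finset.mul_sum,
          ← Finset.sum_add_distrib]
        congr! 2
        ring
    _ = ∑ g, ∑ g', (v g' - v g) ^ 2 * (S g g' * K g g') := by
        nth_rw 2 [hswap]
        simp only [← Finset.sum_add_distrib]
        congr! 2
        ring

lemma graphLaplacian_isHermitian (hSK : ∀ g g', S g g' * K g g' = S g' g * K g' g) :
    (graphLaplacian K S).IsHermitian := by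
  refine Matrix.IsHermitian.ext fun g g' ↦ ?_
  obtain rfl | hne := eq_or_ne g g'
  · rfl
  · simp [graphLaplacian, hne, hne.symm, mul_assoc, hSK g g']

lemma graphLaplacian_posSemidef (hSK : ∀ g g', S g g' * K g g' = S g' g * K g' g)
    (hnonneg : ∀ g g', 0 ≤ S g g' * K g g') : (graphLaplacian K S).PosSemidef := by
  refine .of_dotProduct_mulVec_nonneg (graphLaplacian_isHermitian hSK) fun v ↦ ?_
  rw [star_trivial, dotProduct_graphLaplacian_mulVec hSK]
  exact Finset.sum_nonneg fun g _ ↦ Finset.sum_nonneg fun g' _ ↦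
    mul_nonneg (sq_nonneg _) (hnonneg g g')

lemma graphLaplacian_mulVec_mem_meanZero (hSK : ∀ g g', S g g' * K g g' = S g' g * K g' g)
    (v : G → ℝ) : graphLaplacian K S *ᵥ v ∈ meanZero G := by
  have hone : graphLaplacian K S *ᵥ 1 = 0 := by
    ext g
    simp [graphLaplacian_mulVec_apply]
  rw [mem_meanZero, ← one_dotProduct, Matrix.dotProduct_mulVec, ← Matrix.mulVec_transpose,
    ← Matrix.conjTranspose_eq_transpose_of_trivial, (graphLaplacian_isHermitian hSK).eq, hone,
    zero_dotProduct]

lemma eq_of_graphLaplacian_mulVec_eq_zero (hSK : ∀ g g', S g g' * K g g' = S g' g * K g' g)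
    (hnonneg : ∀ g g', 0 ≤ S g g' * K g g')
    (hconn : ∀ g g', Relation.ReflTransGen (fun a b ↦ 0 < S a b * K a b) g g')
    {v : G → ℝ} (hv : graphLaplacian K S *ᵥ v = 0) (g g' : G) : v g = v g' := by
  have hterm (a b : G) : 0 ≤ (v b - v a) ^ 2 * (S a b * K a b) :=
    mul_nonneg (sq_nonneg _) (hnonneg a b)
  have henergy : ∑ a, ∑ b, (v b - v a) ^ 2 * (S a b * K a b) = 0 := by
    rw [← dotProduct_graphLaplacian_mulVec hSK, hv, dotProduct_zero]
  have hedge (a b : G) (hab : 0 < S a b * K a b) : v a = v b := by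
    have hrow := (Fintype.sum_eq_zero_iff_of_nonneg fun a ↦
      Finset.sum_nonneg fun b _ ↦ hterm a b).1 henergy
    have hzero := congrFun ((Fintype.sum_eq_zero_iff_of_nonneg (hterm a)).1 (congrFun hrow a)) b
    have hsq := (mul_eq_zero.1 hzero).resolve_right hab.ne'
    exact (sub_eq_zero.1 (sq_eq_zero_iff.1 hsq)).symm
  induction hconn g g' with
  | refl => rfl
  | tail _ hab ih => exact ih.trans (hedge _ _ hab)

lemma graphLaplacian_mulVec_bijOn_meanZero (hSK : ∀ g g', S g g' * K g g' = S g' g * K g' g)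
    (hnonneg : ∀ g g', 0 ≤ S g g' * K g g')
    (hconn : ∀ g g', Relation.ReflTransGen (fun a b ↦ 0 < S a b * K a b) g g') :
    Set.BijOn (graphLaplacian K S).mulVec (meanZero G) (meanZero G) := by
  have hmaps (v : G → ℝ) (_ : v ∈ meanZero G) : (graphLaplacian K S).mulVecLin v ∈ meanZero G :=
    graphLaplacian_mulVec_mem_meanZero hSK v
  have hinj : Set.InjOn (graphLaplacian K S).mulVecLin (meanZero G) := by
    intro v hv w hw hvw
    have hker : graphLaplacian K S *ᵥ (v - w) = 0 := by
      rw [Matrix.mulVec_sub]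
      exact sub_eq_zero.2 hvw
    exact sub_eq_zero.1 <| eq_zero_of_mem_meanZero_of_forall_eq (sub_mem hv hw) <|
      eq_of_graphLaplacian_mulVec_eq_zero hSK hnonneg hconn hker
  exact ⟨hmaps, hinj, (LinearMap.injOn_iff_surjOn hmaps).1 hinj⟩

lemma graphLaplacian_energy_le (hSK : ∀ g g', S g g' * K g g' = S g' g * K g' g)
    (hnonneg : ∀ g g', 0 ≤ S g g' * K g g') (v : G → ℝ) :
    ∑ g, ∑ g', (v g' - v g) ^ 2 * S g g' * K g g' ≤
      (1 / firstNonzeroEigenvalue K S) * ∑ g, (graphLaplacian K S *ᵥ v) g ^ 2 := by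
  simp only [mul_assoc _ (S _ _)]
  rw [← dotProduct_graphLaplacian_mulVec hSK, firstNonzeroEigenvalue_eq_sInf_spectrum, one_div]
  simpa only [dotProduct, sq] using
    dotProduct_mulVec_le_inv_sInf_spectrum_mul (graphLaplacian_posSemidef hSK hnonneg) v

end GraphLaplacian

/-- **Existence, uniqueness and energy bound for the elliptic graph PDE.**
Let `(G,K)` be a connected finite weighted graph, let `φ : G → ℝ` satisfy `Σ_g φ(g) = 0`,
and let `S : G × G → [0,∞)` be symmetric and strictly positive whenever `K(g,g') > 0`.
Then there exists a unique `η : G → ℝ` with `Σ_g η(g) = 0` solving the graph PDE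
`div_g(∇_g η · S) = φ`, where `div_g h(g) = Σ_{g'} (h(g,g') − h(g',g)) K(g,g')` and
`(∇_g η · S)(g,g') = (η(g') − η(g)) S(g,g')`.  Moreover
`Σ_{g,g'} |η(g') − η(g)|² S(g,g') K(g,g') ≤ (1/λ_S) Σ_g |φ(g)|²`, where `λ_S` is the
first nonzero eigenvalue of the graph Laplacian matrix `L_S`. -/
theorem graph_pde_existence_uniqueness {G : Type*} [Fintype G] [DecidableEq G]
    (K S : G → G → ℝ) (φ : G → ℝ)
    (hK0 : ∀ g g', 0 ≤ K g g') (hKsym : ∀ g g', K g g' = K g' g)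
    (hconn : ∀ g g' : G, Relation.ReflTransGen (fun a b => 0 < K a b) g g')
    (hφ : ∑ g, φ g = 0)
    (hS0 : ∀ g g', 0 ≤ S g g') (hSsym : ∀ g g', S g g' = S g' g)
    (hSpos : ∀ g g', 0 < K g g' → 0 < S g g') :
    ∃ η : G → ℝ,
      ((∑ g, η g = 0) ∧
        (∀ g : G, ∑ g', ((η g' - η g) * S g g' - (η g - η g') * S g' g) * K g g' = φ g)) ∧
      (∀ η' : G → ℝ,
        ((∑ g, η' g = 0) ∧
          (∀ g : G, ∑ g', ((η' g' - η' g) * S g g' - (η' g - η' g') * S g' g) * K g g' = φ g))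
          → η' = η) ∧
      (∑ g, ∑ g', (η g' - η g) ^ 2 * S g g' * K g g'
        ≤ (1 / firstNonzeroEigenvalue K S) * ∑ g, (φ g) ^ 2) := by
  have hSK (g g' : G) : S g g' * K g g' = S g' g * K g' g := by rw [hSsym, hKsym]
  have hnonneg (g g' : G) : 0 ≤ S g g' * K g g' := mul_nonneg (hS0 g g') (hK0 g g')
  have hbij := graphLaplacian_mulVec_bijOn_meanZero hSK hnonneg fun g g' ↦
    Relation.ReflTransGen.mono (fun a b hab ↦ mul_pos (hSpos a b hab) hab) g g' (hconn g g')
  have hpde (v : G → ℝ) :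
      (∀ g, ∑ g', ((v g' - v g) * S g g' - (v g - v g') * S g' g) * K g g' = φ g) ↔
        (graphLaplacian K S).mulVec v = -φ := by
    simp only [div_grad_eq_neg_graphLaplacian_mulVec K hSsym, neg_eq_iff_eq_neg, funext_iff,
      Pi.neg_apply]
  simp only [hpde]
  obtain ⟨η, hη, hLη⟩ := hbij.surjOn (neg_mem (mem_meanZero.2 hφ))
  refine ⟨η, ⟨mem_meanZero.1 hη, hLη⟩, fun η' ⟨hη', hLη'⟩ ↦ ?_, ?_⟩
  · exact hbij.injOn (mem_meanZero.2 hη') hη (hLη'.trans hLη.symm)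
  · simpa only [hLη, Pi.neg_apply, neg_sq] using graphLaplacian_energy_le hSK hnonneg η
end

section
/- Let μ, σ ∈ P_2(ℝ^d × G) and suppose A^{G,W,τ}(μ,σ) < ∞. Then the set Opt(μ,σ) of minimizers of the static semi-discrete transportation cost is non-empty, i.e., the infimum defining A^{G,W,τ}(μ,σ) is attained by some admissible pair (γ,h) ∈ ADM(μ,σ). -/
/-!
The proof is the direct method, with the parallelogram law replacing weak compactness of the
exchange fields.

After multiplication by a suitable weight, the field `h` becomes an element `v` of `L²`, and the
cost becomes `T γ + ‖v‖²` with `T` linear in the plans. Admissibility is stable under midpoints, so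
along a minimizing sequence the fields `v` are Cauchy in `L²` and converge strongly.

By antisymmetry the exchange cancels when the balance condition is summed over the graph: the second
marginals of admissible plans have the same sum as the measures `σ_g`, hence lie below
`S = Σ_g σ_g`. Since both marginals are thus dominated by fixed finite measures, the plans form a
tight family. Moreover the net exchange at each vertex is a difference of two measures below `S`, so
it is bounded by the Lebesgue density of `S`, which is integrable. Dominated convergence therefore
passes to the limit in the balance condition although nothing is assumed on the integrability of
`e^{-W}`. As `T` is lower semicontinuous, the limit is optimal.
-/

open MeasureTheory ENNReal Filter
open scoped RealInnerProductSpace Classical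

noncomputable section

/-- `ℝ^d` as a Euclidean space. -/
abbrev Ed (d : ℕ) : Type := EuclideanSpace ℝ (Fin d)

/-- The reference measure `dx ⊗ dg` on `ℝ^d × G` (Lebesgue times counting measure). -/
def refM (d : ℕ) (G : Type*) [MeasurableSpace G] : Measure (Ed d × G) :=
  (volume : Measure (Ed d)).prod Measure.count

/-- The fiber measure `μ_g` on `ℝ^d` of a measure `μ` on `ℝ^d × G`, so that
`μ = Σ_g μ_g ⊗ δ_g`, i.e. `μ_g(A) = μ(A × {g})`. -/
def fiber {d : ℕ} {G : Type*} [MeasurableSpace G] (μ : Measure (Ed d × G)) (g : G) :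
    Measure (Ed d) :=
  (μ.restrict {p | p.2 = g}).map Prod.fst

/-- `P_2(ℝ^d × G)`: Borel probability measures on `ℝ^d × G` with finite second moment. -/
def P2 (d : ℕ) (G : Type*) [MeasurableSpace G] : Set (Measure (Ed d × G)) :=
  {μ | IsProbabilityMeasure μ ∧ ∫⁻ p, ENNReal.ofReal (‖p.1‖ ^ 2) ∂μ < ⊤}

/-- The admissible pairs `(γ, h)` for the static semi-discrete transport problem between
`μ` and `σ`:  each `γ_g` has first marginal `μ_g`; `h` is antisymmetric in the two graph
variables and square integrable against `e^{-W} K`; and the balance condition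
`σ_g = π_{2#}γ_g − τ Σ_{g'} h_{gg'} K(g,g') e^{-W} dx` holds. -/
def InADM {d : ℕ} {G : Type*} [Fintype G] [MeasurableSpace G]
    (τ : ℝ) (W : Ed d → ℝ) (K : G → G → ℝ) (μ σ : Measure (Ed d × G))
    (γ : G → Measure (Ed d × Ed d)) (h : Ed d → G → G → ℝ) : Prop :=
  (∀ g, (γ g).map Prod.fst = fiber μ g) ∧
  (∀ g g', Measurable (fun x => h x g g')) ∧
  (∀ x g g', h x g g' = - h x g' g) ∧
  (∑ g, ∑ g', ∫⁻ x, ENNReal.ofReal ((h x g g') ^ 2 * Real.exp (-W x) * K g g') < ⊤) ∧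
  (∀ g, ∀ A : Set (Ed d), MeasurableSet A →
    ((fiber σ g) A).toReal
      = (((γ g).map Prod.snd) A).toReal
        - τ * ∫ x in A, (∑ g', h x g g' * K g g') * Real.exp (-W x))

/-- The static transport cost
`C_τ(γ,h) = Σ_{g,g'} [ (1/2τ) ∫ |x−x'|² dγ_g + (τ/4) ∫ h_{gg'}² K(g,g') e^{−W} dx ]`. -/
def Cost {d : ℕ} {G : Type*} [Fintype G] [MeasurableSpace G]
    (τ : ℝ) (W : Ed d → ℝ) (K : G → G → ℝ)
    (γ : G → Measure (Ed d × Ed d)) (h : Ed d → G → G → ℝ) : ℝ≥0∞ :=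
  ∑ g, ∑ g' : G,
    (ENNReal.ofReal (1 / (2 * τ)) * (∫⁻ p, ENNReal.ofReal (‖p.1 - p.2‖ ^ 2) ∂(γ g))
      + ENNReal.ofReal (τ / 4) * ∫⁻ x, ENNReal.ofReal ((h x g g') ^ 2 * K g g' * Real.exp (-W x)))

/-- The static semi-discrete transportation cost
`A^{G,W,τ}(μ,σ) = inf_{(γ,h) ∈ ADM(μ,σ)} C_τ(γ,h)` (with value `∞` if `ADM(μ,σ) = ∅`). -/
def ACost {d : ℕ} {G : Type*} [Fintype G] [MeasurableSpace G]
    (τ : ℝ) (W : Ed d → ℝ) (K : G → G → ℝ) (μ σ : Measure (Ed d × G)) : ℝ≥0∞ :=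
  ⨅ (γ : G → Measure (Ed d × Ed d)) (h : Ed d → G → G → ℝ)
    (_ : InADM τ W K μ σ γ h), Cost τ W K γ h

/-- `(γ,h)` is an optimal pair: admissible and achieving the infimal cost. -/
def InOpt {d : ℕ} {G : Type*} [Fintype G] [MeasurableSpace G]
    (τ : ℝ) (W : Ed d → ℝ) (K : G → G → ℝ) (μ σ : Measure (Ed d × G))
    (γ : G → Measure (Ed d × Ed d)) (h : Ed d → G → G → ℝ) : Prop :=
  InADM τ W K μ σ γ h ∧ Cost τ W K γ h = ACost τ W K μ σ

/-- The relative entropy `E(μ) = Σ_g ∫ [f log f + V f] dx` if `μ = f dx⊗dg`,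
and `E(μ) = +∞` otherwise. -/
def Ent {d : ℕ} {G : Type*} [Fintype G] [MeasurableSpace G]
    (V : Ed d → G → ℝ) (μ : Measure (Ed d × G)) : EReal :=
  if (μ ≪ refM d G) ∧
      Integrable (fun p : Ed d × G =>
        (μ.rnDeriv (refM d G) p).toReal * Real.log ((μ.rnDeriv (refM d G) p).toReal)
          + V p.1 p.2 * (μ.rnDeriv (refM d G) p).toReal) (refM d G)
  then ((∫ p, ((μ.rnDeriv (refM d G) p).toReal * Real.log ((μ.rnDeriv (refM d G) p).toReal)
          + V p.1 p.2 * (μ.rnDeriv (refM d G) p).toReal) ∂(refM d G) : ℝ) : EReal)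
  else ⊤

/-- `μ_τ` is a minimizer over `P_2(ℝ^d × G)` of `σ ↦ E(σ) + A^{G,W,τ}(μ,σ)`. -/
def IsJKOMin {d : ℕ} {G : Type*} [Fintype G] [MeasurableSpace G]
    (τ : ℝ) (W : Ed d → ℝ) (K : G → G → ℝ) (V : Ed d → G → ℝ)
    (μ μτ : Measure (Ed d × G)) : Prop :=
  μτ ∈ P2 d G ∧
    ∀ σ ∈ P2 d G,
      Ent V μτ + (ACost τ W K μ μτ : EReal) ≤ Ent V σ + (ACost τ W K μ σ : EReal)

/-- `μ` has density `f` with respect to `dx ⊗ dg`. -/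
def HasDens {d : ℕ} {G : Type*} [Fintype G] [MeasurableSpace G]
    (μ : Measure (Ed d × G)) (f : Ed d → G → ℝ) : Prop :=
  (∀ x g, 0 ≤ f x g) ∧ Measurable (fun p : Ed d × G => f p.1 p.2) ∧
    μ = (refM d G).withDensity (fun p => ENNReal.ofReal (f p.1 p.2))

/-- The (topological) support of a measure. -/
def msupport {α : Type*} [TopologicalSpace α] [MeasurableSpace α] (ν : Measure α) : Set α :=
  {x | ∀ U ∈ nhds x, 0 < ν U}

/-- `y` is a Lebesgue point of `u`: averages of `u` over balls `B_r(y)` converge to `u(y)`. -/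
def LebesguePoint {d : ℕ} {F : Type*} [NormedAddCommGroup F] [NormedSpace ℝ F]
    (u : Ed d → F) (y : Ed d) : Prop :=
  Filter.Tendsto (fun r : ℝ => ⨍ x in Metric.ball y r, u x ∂volume)
    (nhdsWithin 0 (Set.Ioi 0)) (nhds (u y))

end

open MeasureTheory ENNReal

open scoped Topology NNReal BoundedContinuousFunction

noncomputable section

section MeasureBounds

variable {α : Type*} [MeasurableSpace α] {m : Measure α} {F : α → ℝ}

/- The bound is only used on sets where `F` is bounded, of finite measure, so the value `0` of the
Bochner integral of a non-integrable function is harmless. -/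
lemma integrable_of_abs_setIntegral_le [SigmaFinite m] (hF : Measurable F) (C : ℝ)
    (hC : ∀ A, MeasurableSet A → |∫ x in A, F x ∂m| ≤ C) : Integrable F m := by
  let φ : ℕ → Set α := fun k => {x | |F x| ≤ k} ∩ spanningSets m k
  have hφ : ∀ k, MeasurableSet (φ k) := fun k =>
    (measurableSet_le hF.abs measurable_const).inter (measurableSet_spanningSets m k)
  have hcover : AECover m atTop φ := by
    refine ⟨ae_of_all _ fun x => ?_, hφ⟩
    filter_upwards [tendsto_natCast_atTop_atTop.eventually_ge_atTop |F x|,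
      eventually_ge_atTop (spanningSetsIndex m x)] with k hk hxk
    exact ⟨hk, mem_spanningSets_of_index_le m x hxk⟩
  have hint : ∀ k, IntegrableOn F (φ k) m := fun k =>
    Measure.integrableOn_of_bounded (M := k)
      ((measure_mono Set.inter_subset_right).trans_lt (measure_spanningSets_lt_top m k)).ne
      hF.aestronglyMeasurable ((ae_restrict_mem (hφ k)).mono fun x hx => hx.1)
  refine hcover.integrable_of_integral_norm_bounded (2 * C) hint (Eventually.of_forall fun k => ?_)
  have hpos : MeasurableSet {x | 0 ≤ F x} := measurableSet_le measurable_const hF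
  have integral_norm_nonneg_part : ∫ x in φ k ∩ {x | 0 ≤ F x}, ‖F x‖ ∂m
      = ∫ x in φ k ∩ {x | 0 ≤ F x}, F x ∂m :=
    setIntegral_congr_fun ((hφ k).inter hpos) fun x hx => Real.norm_of_nonneg hx.2
  have integral_norm_neg_part : ∫ x in φ k \ {x | 0 ≤ F x}, ‖F x‖ ∂m
      = -∫ x in φ k \ {x | 0 ≤ F x}, F x ∂m := by
    rw [← integral_neg]
    exact setIntegral_congr_fun ((hφ k).diff hpos) fun x hx =>
      Real.norm_of_nonpos (not_le.1 hx.2).le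
  rw [← integral_inter_add_sdiff hpos (hint k).norm,
    integral_norm_nonneg_part, integral_norm_neg_part]
  linarith [le_of_abs_le (hC _ ((hφ k).inter hpos)), neg_le_of_abs_le (hC _ ((hφ k).diff hpos))]

/- The singular part of `S` is carried by an `m`-null set, which may be removed from any set of
integration. -/
lemma abs_le_rnDeriv_of_abs_setIntegral_le {S : Measure α} [IsFiniteMeasure S]
    [S.HaveLebesgueDecomposition m] (hF : Integrable F m)
    (hFS : ∀ A, MeasurableSet A → |∫ x in A, F x ∂m| ≤ S.real A) :
    ∀ᵐ x ∂m, |F x| ≤ (S.rnDeriv m x).toReal := by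
  obtain ⟨N, hN, hN_sing, hN_null⟩ := S.mutuallySingular_singularPart m
  have setIntegral_le : ∀ A, MeasurableSet A →
      |∫ x in A, F x ∂m| ≤ ∫ x in A, (S.rnDeriv m x).toReal ∂m := by
    intro A hA
    have hAN : (A ∩ N : Set α) =ᵐ[m] A := inter_ae_eq_left_of_ae_eq_univ (ae_eq_univ.2 hN_null)
    rw [← setIntegral_congr_set hAN, ← setIntegral_congr_set hAN]
    refine (hFS _ (hA.inter hN)).trans_eq ?_
    have hS : S (A ∩ N) = m.withDensity (S.rnDeriv m) (A ∩ N) := by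
      conv_lhs => rw [S.haveLebesgueDecomposition_add m]
      rw [Measure.add_apply, measure_mono_null Set.inter_subset_right hN_sing, zero_add]
    rw [integral_toReal (by fun_prop) (ae_restrict_of_ae (S.rnDeriv_lt_top m)),
      ← withDensity_apply _ (hA.inter hN), ← hS, Measure.real]
  have hle : F ≤ᵐ[m] fun x => (S.rnDeriv m x).toReal :=
    ae_le_of_forall_setIntegral_le hF Measure.integrable_toReal_rnDeriv fun A hA _ =>
      (le_abs_self _).trans (setIntegral_le A hA)
  have hneg_le : (fun x => -F x) ≤ᵐ[m] fun x => (S.rnDeriv m x).toReal :=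
    ae_le_of_forall_setIntegral_le hF.neg Measure.integrable_toReal_rnDeriv fun A hA _ => by
      rw [integral_neg]
      exact (neg_le_abs _).trans (setIntegral_le A hA)
  filter_upwards [hle, hneg_le] with x hx hx'
  exact abs_le'.2 ⟨hx, hx'⟩

lemma setIntegral_eq_withDensity_sub (hF : Integrable F m) {A : Set α} (hA : MeasurableSet A) :
    ∫ x in A, F x ∂m = (m.withDensity fun x => ENNReal.ofReal (F x)).real A
      - (m.withDensity fun x => ENNReal.ofReal (-F x)).real A := by
  rw [integral_eq_lintegral_pos_part_sub_lintegral_neg_part hF.integrableOn, Measure.real,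
    Measure.real, withDensity_apply _ hA, withDensity_apply _ hA]

lemma integral_mul_eq_withDensity_sub (hF : Integrable F m) {f : α → ℝ}
    (hf : AEStronglyMeasurable f m) {c : ℝ} (hfc : ∀ x, ‖f x‖ ≤ c) :
    ∫ x, f x * F x ∂m = ∫ x, f x ∂m.withDensity (fun x => ENNReal.ofReal (F x))
      - ∫ x, f x ∂m.withDensity (fun x => ENNReal.ofReal (-F x)) := by
  have integrable_part {H : α → ℝ} (hH : Integrable H m) :
      Integrable (fun x => (ENNReal.ofReal (H x)).toReal • f x) m := by
    simpa only [ENNReal.toReal_ofReal', smul_eq_mul] using hH.pos_part.mul_bdd hf (ae_of_all _ hfc)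
  have hFm := hF.1.aemeasurable
  rw [integral_withDensity_eq_integral_toReal_smul₀ hFm.ennreal_ofReal (by simp),
    integral_withDensity_eq_integral_toReal_smul₀ hFm.fun_neg.ennreal_ofReal (by simp),
    ← integral_sub (integrable_part hF) (integrable_part hF.fun_neg)]
  refine integral_congr_ae (ae_of_all _ fun x => ?_)
  simp only [ENNReal.toReal_ofReal', smul_eq_mul]
  rw [← sub_mul, max_zero_sub_max_neg_zero_eq_self, mul_comm]

/- Splitting `F` into positive and negative part turns either form into the identity
`ν + F⁻ m = ρ + F⁺ m` between finite measures. -/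
lemma forall_measureReal_eq_sub_setIntegral_iff [TopologicalSpace α] [HasOuterApproxClosed α]
    [BorelSpace α] {ν ρ : Measure α} [IsFiniteMeasure ν] [IsFiniteMeasure ρ]
    (hF : Integrable F m) :
    (∀ A, MeasurableSet A → ρ.real A = ν.real A - ∫ x in A, F x ∂m) ↔
      ∀ f : α →ᵇ ℝ, ∫ x, f x ∂ν = ∫ x, f x ∂ρ + ∫ x, f x * F x ∂m := by
  set P : Measure α := m.withDensity fun x => ENNReal.ofReal (F x)
  set N : Measure α := m.withDensity fun x => ENNReal.ofReal (-F x)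
  have : IsFiniteMeasure P := isFiniteMeasure_withDensity_ofReal hF.2
  have : IsFiniteMeasure N := isFiniteMeasure_withDensity_ofReal hF.neg.2
  calc (∀ A, MeasurableSet A → ρ.real A = ν.real A - ∫ x in A, F x ∂m)
    _ ↔ ∀ A, MeasurableSet A → (ν + N).real A = (ρ + P).real A := by
      refine forall₂_congr fun A hA => ?_
      rw [setIntegral_eq_withDensity_sub hF hA, measureReal_add_apply, measureReal_add_apply]
      constructor <;> intro h <;> linarith
    _ ↔ ν + N = ρ + P := by
      refine ⟨fun h => Measure.ext fun A hA => ?_, fun h A _ => by rw [h]⟩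
      exact (measureReal_eq_measureReal_iff).1 (h A hA)
    _ ↔ ∀ f : α →ᵇ ℝ, ∫ x, f x ∂(ν + N) = ∫ x, f x ∂(ρ + P) :=
      ⟨fun h f => by rw [h], ext_of_forall_integral_eq_of_IsFiniteMeasure⟩
    _ ↔ ∀ f : α →ᵇ ℝ, ∫ x, f x ∂ν = ∫ x, f x ∂ρ + ∫ x, f x * F x ∂m := by
      refine forall_congr' fun f => ?_
      rw [integral_add_measure (f.integrable _) (f.integrable _),
        integral_add_measure (f.integrable _) (f.integrable _),
        integral_mul_eq_withDensity_sub hF f.continuous.aestronglyMeasurable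
          f.norm_coe_le_norm]
      constructor <;> intro h <;> linarith

end MeasureBounds

section WeakTopology

lemma isCompact_closure_of_isTightMeasureSet_of_mass_le {X : Type*} [TopologicalSpace X]
    [T4Space X] [MeasurableSpace X] [BorelSpace X] {S : Set (FiniteMeasure X)} {C : ℝ≥0}
    (hmass : ∀ ν ∈ S, ν.mass ≤ C)
    (htight : IsTightMeasureSet ((fun ν : FiniteMeasure X => (ν : Measure X)) '' S)) :
    IsCompact (closure S) := by
  obtain ⟨u, -, hu_pos, hu⟩ := exists_seq_strictAnti_tendsto (0 : ℝ≥0)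
  rw [isTightMeasureSet_iff_exists_isCompact_measure_compl_le] at htight
  choose Q hQ hQu using fun n => htight (u n) (ENNReal.coe_pos.2 (hu_pos n))
  refine (isCompact_setOfPred_finiteMeasure_mass_le_compl_isCompact_le C hu hQ
    (Or.inl inferInstance)).closure_of_subset fun ν hν => ⟨hmass ν hν, fun n => ?_⟩
  rw [← ENNReal.coe_le_coe, FiniteMeasure.ennreal_coeFn_eq_coeFn_toMeasure]
  exact hQu n _ (Set.mem_image_of_mem _ hν)

lemma isCompact_closure_plans {X Y : Type*} [TopologicalSpace X] [PolishSpace X]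
    [MeasurableSpace X] [BorelSpace X] [TopologicalSpace Y] [PolishSpace Y] [MeasurableSpace Y]
    [BorelSpace Y] (α : FiniteMeasure X) (β : FiniteMeasure Y) :
    IsCompact (closure {γ : FiniteMeasure (X × Y) |
      γ.map Prod.fst = α ∧ (γ.map Prod.snd : Measure Y) ≤ β}) := by
  refine isCompact_closure_of_isTightMeasureSet_of_mass_le (C := α.mass) ?_ (.prodMk ?_ ?_)
  · rintro γ ⟨hγ, -⟩
    exact hγ ▸ (FiniteMeasure.map_apply γ measurable_fst .univ).ge
  · refine (isTightMeasureSet_singleton (μ := (α : Measure X))).subset ?_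
    rintro _ ⟨_, ⟨γ, hγ, rfl⟩, rfl⟩
    exact congrArg FiniteMeasure.toMeasure hγ.1
  · have hβ := isTightMeasureSet_singleton (μ := (β : Measure Y))
    rw [isTightMeasureSet_iff_exists_isCompact_measure_compl_le] at hβ ⊢
    refine fun ε hε => (hβ ε hε).imp fun Q hQ => ⟨hQ.1, ?_⟩
    rintro _ ⟨_, ⟨γ, hγ, rfl⟩, rfl⟩
    exact (hγ.2 _).trans (hQ.2 _ rfl)

lemma lowerSemicontinuous_lintegral_finiteMeasure {X : Type*} [TopologicalSpace X]
    [MeasurableSpace X] [OpensMeasurableSpace X] {f : X → ℝ≥0} (hf : Continuous f) :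
    LowerSemicontinuous fun ν : FiniteMeasure X => ∫⁻ x, f x ∂(ν : Measure X) := by
  let truncation (k : ℕ) : X →ᵇ ℝ≥0 :=
    .mkOfBound ⟨fun x => min (f x) k, by fun_prop⟩ k fun x y =>
      abs_sub_le_of_nonneg_of_le (min (f x) (k : ℝ≥0)).2 (min_le_right (f x) (k : ℝ≥0))
        (min (f y) (k : ℝ≥0)).2 (min_le_right (f y) (k : ℝ≥0))
  have iSup_truncation (x : X) : ⨆ k, (truncation k x : ℝ≥0∞) = f x := by
    obtain ⟨k, hk⟩ := exists_nat_ge (f x)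
    exact le_antisymm (iSup_le fun k => ENNReal.coe_le_coe.2 (min_le_left _ _))
      (le_iSup_of_le k (ENNReal.coe_le_coe.2 (le_min le_rfl hk)))
  have lintegral_eq_iSup (ν : FiniteMeasure X) :
      ∫⁻ x, f x ∂(ν : Measure X) = ⨆ k, ∫⁻ x, truncation k x ∂(ν : Measure X) := by
    simp_rw [← iSup_truncation]
    refine lintegral_iSup (fun k => (truncation k).continuous.measurable.coe_nnreal_ennreal) ?_
    exact fun k l hkl x => ENNReal.coe_le_coe.2 (min_le_min_left _ (Nat.cast_le.2 hkl))
  simp_rw [lintegral_eq_iSup]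
  exact lowerSemicontinuous_iSup fun k =>
    (FiniteMeasure.continuous_lintegral_boundedContinuousFunction _).lowerSemicontinuous

end WeakTopology

section DirectMethod

variable {P H : Type*} [NormedAddCommGroup H] [InnerProductSpace ℝ H]

lemma enorm_midpoint_sq_add_enorm_sub_sq (x y : H) :
    ‖(2⁻¹ : ℝ) • (x + y)‖ₑ ^ 2 + ‖x - y‖ₑ ^ 2 / 4 = (‖x‖ₑ ^ 2 + ‖y‖ₑ ^ 2) / 2 := by
  have parallelogram : ‖x + y‖₊ ^ 2 + ‖x - y‖₊ ^ 2 = 2 * (‖x‖₊ ^ 2 + ‖y‖₊ ^ 2) := by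
    simpa only [sq] using parallelogram_law_with_nnnorm ℝ x y
  have hnn : ‖(2⁻¹ : ℝ) • (x + y)‖₊ ^ 2 + ‖x - y‖₊ ^ 2 / 4 = (‖x‖₊ ^ 2 + ‖y‖₊ ^ 2) / 2 := by
    rw [nnnorm_smul, nnnorm_inv, Real.nnnorm_ofNat]
    linear_combination 4⁻¹ * parallelogram
  simp only [enorm_eq_nnnorm]
  exact_mod_cast congrArg ((↑) : ℝ≥0 → ℝ≥0∞) hnn

variable {S : Set (P × H)} {T : P → ℝ≥0∞} {mid : P → P → P}

lemma cauchySeq_snd_of_tendsto_lowerBound {p : ℕ → P × H}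
    (hTmid : ∀ p q, T (mid p q) ≤ (T p + T q) / 2)
    (hSmid : ∀ x ∈ S, ∀ y ∈ S, (mid x.1 y.1, (2⁻¹ : ℝ) • (x.2 + y.2)) ∈ S)
    (hpS : ∀ n, p n ∈ S) {c : ℝ≥0∞} (hc : c ≠ ⊤) (hcS : ∀ x ∈ S, c ≤ T x.1 + ‖x.2‖ₑ ^ 2)
    (hp : Tendsto (fun n => T (p n).1 + ‖(p n).2‖ₑ ^ 2) atTop (𝓝 c)) :
    CauchySeq fun n => (p n).2 := by
  have key (n k : ℕ) : c + ‖(p n).2 - (p k).2‖ₑ ^ 2 / 4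
      ≤ ((T (p n).1 + ‖(p n).2‖ₑ ^ 2) + (T (p k).1 + ‖(p k).2‖ₑ ^ 2)) / 2 :=
    calc c + ‖(p n).2 - (p k).2‖ₑ ^ 2 / 4
      _ ≤ T (mid (p n).1 (p k).1) + ‖(2⁻¹ : ℝ) • ((p n).2 + (p k).2)‖ₑ ^ 2
            + ‖(p n).2 - (p k).2‖ₑ ^ 2 / 4 := by
        gcongr
        exact hcS _ (hSmid _ (hpS n) _ (hpS k))
      _ ≤ (T (p n).1 + T (p k).1) / 2 + (‖(p n).2‖ₑ ^ 2 + ‖(p k).2‖ₑ ^ 2) / 2 := by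
        rw [add_assoc, enorm_midpoint_sq_add_enorm_sub_sq]
        gcongr
        exact hTmid _ _
      _ = _ := by rw [← ENNReal.add_div, add_add_add_comm]
  refine EMetric.cauchySeq_iff.2 fun ε hε => ?_
  have hlt : c < c + ε ^ 2 / 4 :=
    ENNReal.lt_add_right hc (ENNReal.div_pos (pow_ne_zero 2 hε.ne') ofNat_ne_top).ne'
  obtain ⟨N, hN⟩ := eventually_atTop.1 (hp.eventually_lt_const hlt)
  refine ⟨N, fun n hn k hk => ?_⟩
  have havg : c + ‖(p n).2 - (p k).2‖ₑ ^ 2 / 4 < c + ε ^ 2 / 4 := by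
    refine (key n k).trans_lt (ENNReal.div_lt_of_lt_mul ?_)
    rw [mul_two]
    exact ENNReal.add_lt_add (hN n hn) (hN k hk)
  rw [edist_eq_enorm_sub]
  exact lt_of_pow_lt_pow_left' 2 ((ENNReal.div_lt_div_iff_left four_ne_zero ofNat_ne_top).1
    (lt_of_add_lt_add_left havg))

theorem exists_isMinOn_add_enorm_sq [TopologicalSpace P] [CompleteSpace H] {K : Set P}
    (hK : IsCompact K) (hTlsc : LowerSemicontinuous T)
    (hTmid : ∀ p q, T (mid p q) ≤ (T p + T q) / 2)
    (hS : IsClosed S) (hSK : ∀ x ∈ S, x.1 ∈ K)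
    (hSmid : ∀ x ∈ S, ∀ y ∈ S, (mid x.1 y.1, (2⁻¹ : ℝ) • (x.2 + y.2)) ∈ S)
    (hfin : ∃ x ∈ S, T x.1 + ‖x.2‖ₑ ^ 2 < ⊤) :
    ∃ x ∈ S, IsMinOn (fun x : P × H => T x.1 + ‖x.2‖ₑ ^ 2) S x := by
  let cost : P × H → ℝ≥0∞ := fun x => T x.1 + ‖x.2‖ₑ ^ 2
  have hcost : LowerSemicontinuous cost :=
    (hTlsc.comp continuous_fst).add
      ((ENNReal.continuous_pow 2).comp continuous_snd.enorm).lowerSemicontinuous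
  obtain ⟨x₀, hx₀, hx₀_fin⟩ := hfin
  have sInf_le_cost : ∀ x ∈ S, sInf (cost '' S) ≤ cost x := fun x hx =>
    sInf_le (Set.mem_image_of_mem _ hx)
  obtain ⟨c, -, hc, hcS⟩ := exists_seq_tendsto_sInf (S := cost '' S) ⟨_, x₀, hx₀, rfl⟩
    (OrderBot.bddBelow _)
  choose p hpS hpc using hcS
  have hp : Tendsto (fun n => cost (p n)) atTop (𝓝 (sInf (cost '' S))) := by simpa only [hpc]
  obtain ⟨v, hv⟩ := cauchySeq_tendsto_of_complete <| cauchySeq_snd_of_tendsto_lowerBound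
    hTmid hSmid hpS ((sInf_le_cost x₀ hx₀).trans_lt hx₀_fin).ne sInf_le_cost hp
  let U : Ultrafilter ℕ := .of atTop
  have hU : (U : Filter ℕ) ≤ atTop := Ultrafilter.of_le atTop
  obtain ⟨q, -, hq⟩ := hK.ultrafilter_le_nhds' (U.map fun n => (p n).1)
    (Ultrafilter.mem_map.2 (univ_mem' fun n => hSK _ (hpS n)))
  have hpq : Tendsto p U (𝓝 (q, v)) := Tendsto.prodMk_nhds hq (hv.mono_left hU)
  have cost_le : cost (q, v) ≤ sInf (cost '' S) :=
    calc cost (q, v)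
      _ ≤ liminf cost (𝓝 (q, v)) := hcost.le_liminf _
      _ ≤ liminf (cost ∘ p) U := hpq.liminf_le_liminf_comp
      _ = sInf (cost '' S) := (hp.mono_left hU).liminf_eq
  exact ⟨(q, v), hS.mem_of_tendsto hpq (Eventually.of_forall hpS),
    isMinOn_iff.2 fun x hx => cost_le.trans (sInf_le_cost x hx)⟩

end DirectMethod

section EdgeFields

variable {G : Type*} [Fintype G] {b : G → G → ℝ}

/-- The antisymmetric functions on `G × G` supported on the edges, i.e. on the pairs of non-zero
weight `b`. -/
def edgeFields (b : G → G → ℝ) : Submodule ℝ (EuclideanSpace ℝ (G × G)) where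
  carrier := {e | ∀ g g', e (g, g') = -e (g', g) ∧ (b g g' = 0 → e (g, g') = 0)}
  zero_mem' g g' := by simp
  add_mem' {e₁ e₂} he₁ he₂ g g' := by
    refine ⟨?_, fun hb => ?_⟩
    · rw [PiLp.add_apply, PiLp.add_apply, (he₁ g g').1, (he₂ g g').1, neg_add]
    · rw [PiLp.add_apply, (he₁ g g').2 hb, (he₂ g g').2 hb, add_zero]
  smul_mem' c e he g g' := by
    refine ⟨?_, fun hb => ?_⟩
    · rw [PiLp.smul_apply, PiLp.smul_apply, (he g g').1, smul_neg]
    · rw [PiLp.smul_apply, (he g g').2 hb, smul_zero]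

/-- The mass leaving the vertex `g` when a function `e` on the pairs of vertices is the flow and
`b` is the weight of the edges. -/
def outflow (b : G → G → ℝ) (g : G) : EuclideanSpace ℝ (G × G) →L[ℝ] ℝ :=
  ∑ g', b g g' • EuclideanSpace.proj (g, g')

lemma outflow_apply (g : G) (e : EuclideanSpace ℝ (G × G)) :
    outflow b g e = ∑ g', b g g' * e (g, g') := by
  simp [outflow]

lemma sum_outflow_eq_zero (hb : ∀ g g', b g g' = b g' g) {e : EuclideanSpace ℝ (G × G)}
    (he : e ∈ edgeFields b) : ∑ g, outflow b g e = 0 := by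
  refine self_eq_neg.1 ?_
  calc ∑ g, outflow b g e
    _ = ∑ g', ∑ g, b g g' * e (g, g') := by simp_rw [outflow_apply]; exact Finset.sum_comm
    _ = ∑ g', -outflow b g' e := by
      refine Finset.sum_congr rfl fun g' _ => ?_
      rw [outflow_apply, ← Finset.sum_neg_distrib]
      refine Finset.sum_congr rfl fun g _ => ?_
      rw [hb, (he g g').1, mul_neg]
    _ = -∑ g, outflow b g e := Finset.sum_neg_distrib _

lemma measurable_outflow {Y : Type*} [MeasurableSpace Y] {a : Y → G → G → ℝ}
    (ha : ∀ g g', Measurable fun x => a x g g') {v : Y → EuclideanSpace ℝ (G × G)}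
    (hv : Measurable v) (g : G) : Measurable fun x => outflow (a x) g (v x) := by
  simp_rw [outflow_apply]
  exact Finset.measurable_sum _ fun g' _ => (ha g g').mul (by fun_prop)

end EdgeFields

lemma isClosed_setOf_ae_mem {Y E : Type*} [MeasurableSpace Y] {m : Measure Y}
    [NormedAddCommGroup E] {p : ℝ≥0∞} [Fact (1 ≤ p)] {C : Y → Set E} (hC : ∀ x, IsClosed (C x)) :
    IsClosed {v : Lp E p m | ∀ᵐ x ∂m, v x ∈ C x} := by
  refine isClosed_of_closure_subset fun v hv => ?_
  obtain ⟨u, hu, huv⟩ := mem_closure_iff_seq_limit.1 hv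
  obtain ⟨φ, -, hφ⟩ := (tendstoInMeasure_of_tendsto_Lp huv).exists_seq_tendsto_ae
  filter_upwards [hφ, ae_all_iff.2 hu] with x hx hux
  exact (hC x).mem_of_tendsto hx (Eventually.of_forall fun n => hux (φ n))

section Exchange

/-- Square integrable families of functions on the pairs of vertices of `G`. -/
abbrev EdgeL2 (G : Type*) [Fintype G] {Y : Type*} [MeasurableSpace Y] (m : Measure Y) : Type _ :=
  Lp (EuclideanSpace ℝ (G × G)) 2 m

variable {G X Y : Type*} [Fintype G] [MeasurableSpace X] [MeasurableSpace Y] {m : Measure Y}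
  {a : Y → G → G → ℝ} {α : G → FiniteMeasure X} {β : G → FiniteMeasure Y}
  {γ γ₁ γ₂ : G → FiniteMeasure (X × Y)} {v v₁ v₂ : EdgeL2 G m}

/-- Transport with exchange: the plan `γ g` carries the mass `α g` of the species `g` from `X` to
`Y`, where the edge field `v`, weighted by `a`, redistributes it among the species so as to produce
`β g`. -/
structure IsAdmissible (m : Measure Y) (a : Y → G → G → ℝ) (α : G → FiniteMeasure X)
    (β : G → FiniteMeasure Y) (γ : G → FiniteMeasure (X × Y))
    (v : EdgeL2 G m) : Prop where
  map_fst : ∀ g, (γ g).map Prod.fst = α g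
  mem_edgeFields : ∀ᵐ x ∂m, v x ∈ edgeFields (a x)
  balance : ∀ g A, MeasurableSet A → (β g : Measure Y).real A
    = ((γ g).map Prod.snd : Measure Y).real A - ∫ x in A, outflow (a x) g (v x) ∂m

/-- The total target mass, all species together; it dominates every second marginal and thereby
every outflow. -/
def totalMass (β : G → FiniteMeasure Y) : FiniteMeasure Y := ∑ g, β g

lemma totalMass_apply (β : G → FiniteMeasure Y) (A : Set Y) :
    (totalMass β : Measure Y) A = ∑ g, (β g : Measure Y) A := by
  rw [totalMass, FiniteMeasure.toMeasure_sum, Measure.finsetSum_apply]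

lemma measureReal_totalMass (β : G → FiniteMeasure Y) (A : Set Y) :
    (totalMass β : Measure Y).real A = ∑ g, (β g : Measure Y).real A := by
  rw [Measure.real, totalMass_apply, ENNReal.toReal_sum fun g _ => measure_ne_top _ A]
  rfl

lemma le_totalMass (β : G → FiniteMeasure Y) (g : G) : (β g : Measure Y) ≤ totalMass β := by
  intro A
  rw [totalMass_apply]
  exact Finset.single_le_sum_of_canonicallyOrdered (f := fun g => (β g : Measure Y) A)
    (Finset.mem_univ g)

namespace IsAdmissible

lemma setIntegral_outflow (hadm : IsAdmissible m a α β γ v) (g : G) {A : Set Y}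
    (hA : MeasurableSet A) : ∫ x in A, outflow (a x) g (v x) ∂m
      = ((γ g).map Prod.snd : Measure Y).real A - (β g : Measure Y).real A := by
  rw [hadm.balance g A hA, _root_.sub_sub_cancel]

variable [SigmaFinite m]

lemma integrable_outflow (hadm : IsAdmissible m a α β γ v)
    (ha : ∀ g g', Measurable fun x => a x g g') (g : G) :
    Integrable (fun x => outflow (a x) g (v x)) m := by
  refine integrable_of_abs_setIntegral_le
    (measurable_outflow ha (Lp.stronglyMeasurable v).measurable g)
    (max (((γ g).map Prod.snd : Measure Y).real .univ) ((β g : Measure Y).real .univ))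
    fun A hA => ?_
  rw [hadm.setIntegral_outflow g hA]
  exact abs_sub_le_of_nonneg_of_le measureReal_nonneg
    (le_max_of_le_left (measureReal_mono A.subset_univ)) measureReal_nonneg
    (le_max_of_le_right (measureReal_mono A.subset_univ))

lemma totalMass_map_snd (hadm : IsAdmissible m a α β γ v)
    (ha : ∀ g g', Measurable fun x => a x g g') (hsymm : ∀ x g g', a x g g' = a x g' g) :
    totalMass (fun g => (γ g).map Prod.snd) = totalMass β := by
  refine FiniteMeasure.eq_of_forall_toMeasure_apply_eq _ _ fun A hA => ?_
  rw [← measureReal_eq_measureReal_iff, measureReal_totalMass, measureReal_totalMass, ← sub_eq_zero,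
    ← Finset.sum_sub_distrib]
  simp_rw [← hadm.setIntegral_outflow _ hA]
  rw [← integral_finsetSum _ fun g _ => (hadm.integrable_outflow ha g).integrableOn]
  refine integral_eq_zero_of_ae (ae_restrict_of_ae ?_)
  filter_upwards [hadm.mem_edgeFields] with x hx
  exact sum_outflow_eq_zero (hsymm x) hx

lemma map_snd_le_totalMass (hadm : IsAdmissible m a α β γ v)
    (ha : ∀ g g', Measurable fun x => a x g g') (hsymm : ∀ x g g', a x g g' = a x g' g) (g : G) :
    ((γ g).map Prod.snd : Measure Y) ≤ totalMass β :=
  hadm.totalMass_map_snd ha hsymm ▸ le_totalMass (fun g => (γ g).map Prod.snd) g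

lemma abs_outflow_le (hadm : IsAdmissible m a α β γ v)
    (ha : ∀ g g', Measurable fun x => a x g g') (hsymm : ∀ x g g', a x g g' = a x g' g) (g : G) :
    ∀ᵐ x ∂m, |outflow (a x) g (v x)| ≤ ((totalMass β : Measure Y).rnDeriv m x).toReal := by
  refine abs_le_rnDeriv_of_abs_setIntegral_le (hadm.integrable_outflow ha g) fun A hA => ?_
  have real_le {ν : Measure Y} (hν : ν ≤ totalMass β) :
      ν.real A ≤ (totalMass β : Measure Y).real A :=
    ENNReal.toReal_mono (measure_ne_top _ A) (hν A)
  rw [hadm.setIntegral_outflow g hA]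
  exact abs_sub_le_of_nonneg_of_le measureReal_nonneg
    (real_le (hadm.map_snd_le_totalMass ha hsymm g)) measureReal_nonneg
    (real_le (le_totalMass β g))

lemma midpoint (h₁ : IsAdmissible m a α β γ₁ v₁) (h₂ : IsAdmissible m a α β γ₂ v₂)
    (ha : ∀ g g', Measurable fun x => a x g g') :
    IsAdmissible m a α β ((2⁻¹ : ℝ≥0) • (γ₁ + γ₂)) ((2⁻¹ : ℝ) • (v₁ + v₂)) := by
  have hv : ((2⁻¹ : ℝ) • (v₁ + v₂) : EdgeL2 G m)
      =ᵐ[m] fun x => (2⁻¹ : ℝ) • (v₁ x + v₂ x) :=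
    (Lp.coeFn_smul _ _).trans ((Lp.coeFn_add v₁ v₂).const_smul _)
  refine ⟨fun g => ?_, ?_, fun g A hA => ?_⟩
  · rw [Pi.smul_apply, Pi.add_apply, FiniteMeasure.map_smul, FiniteMeasure.map_add measurable_fst,
      h₁.map_fst, h₂.map_fst, ← two_smul ℝ≥0 (α g), inv_smul_smul₀ two_ne_zero]
  · filter_upwards [hv, h₁.mem_edgeFields, h₂.mem_edgeFields] with x hx hx₁ hx₂
    rw [hx]
    exact Submodule.smul_mem _ _ (Submodule.add_mem _ hx₁ hx₂)
  · have setIntegral_midpoint :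
        ∫ x in A, outflow (a x) g (((2⁻¹ : ℝ) • (v₁ + v₂) : EdgeL2 G m) x) ∂m
          = 2⁻¹ * (∫ x in A, outflow (a x) g (v₁ x) ∂m + ∫ x in A, outflow (a x) g (v₂ x) ∂m) := by
      rw [← integral_add (h₁.integrable_outflow ha g).integrableOn
        (h₂.integrable_outflow ha g).integrableOn, ← integral_const_mul]
      refine integral_congr_ae (ae_restrict_of_ae ?_)
      filter_upwards [hv] with x hx
      rw [hx, map_smul, map_add, smul_eq_mul]
    rw [Pi.smul_apply, Pi.add_apply, FiniteMeasure.map_smul, FiniteMeasure.map_add measurable_snd,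
      setIntegral_midpoint, FiniteMeasure.toMeasure_smul, FiniteMeasure.toMeasure_add,
      measureReal_nnreal_smul_apply, measureReal_add_apply, h₁.setIntegral_outflow g hA,
      h₂.setIntegral_outflow g hA]
    push_cast
    ring

end IsAdmissible

lemma isAdmissible_iff_weak [SigmaFinite m] [TopologicalSpace Y] [HasOuterApproxClosed Y]
    [BorelSpace Y] (ha : ∀ g g', Measurable fun x => a x g g')
    (hsymm : ∀ x g g', a x g g' = a x g' g) :
    IsAdmissible m a α β γ v ↔ (∀ g, (γ g).map Prod.fst = α g) ∧
      (∀ᵐ x ∂m, v x ∈ edgeFields (a x) ∧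
        ∀ g, |outflow (a x) g (v x)| ≤ ((totalMass β : Measure Y).rnDeriv m x).toReal) ∧
      ∀ g (f : Y →ᵇ ℝ), ∫ y, f y ∂((γ g).map Prod.snd : Measure Y)
        = ∫ y, f y ∂(β g : Measure Y) + ∫ x, f x * outflow (a x) g (v x) ∂m := by
  constructor
  · intro hadm
    refine ⟨hadm.map_fst, hadm.mem_edgeFields.and
      (ae_all_iff.2 (hadm.abs_outflow_le ha hsymm)), fun g => ?_⟩
    exact (forall_measureReal_eq_sub_setIntegral_iff (hadm.integrable_outflow ha g)).1
      (hadm.balance g)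
  · rintro ⟨hfst, hbound, hweak⟩
    refine ⟨hfst, hbound.mono fun x hx => hx.1, fun g => ?_⟩
    have hint : Integrable (fun x => outflow (a x) g (v x)) m :=
      Measure.integrable_toReal_rnDeriv.mono'
        (measurable_outflow ha (Lp.stronglyMeasurable v).measurable g).aestronglyMeasurable
        (hbound.mono fun x hx => hx.2 g)
    exact (forall_measureReal_eq_sub_setIntegral_iff hint).2 (hweak g)

lemma continuousOn_integral_mul_outflow [TopologicalSpace Y] [OpensMeasurableSpace Y]
    (ha : ∀ g g', Measurable fun x => a x g g') (g : G) (f : Y →ᵇ ℝ) {D : Y → ℝ}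
    (hD : Integrable D m) :
    ContinuousOn (fun v : EdgeL2 G m =>
      ∫ x, f x * outflow (a x) g (v x) ∂m) {v | ∀ᵐ x ∂m, |outflow (a x) g (v x)| ≤ D x} := by
  rw [continuousOn_iff_continuous_domRestrict, continuous_iff_seqContinuous]
  refine fun u v huv => tendsto_of_subseq_tendsto fun ns hns => ?_
  obtain ⟨φ, -, hφ⟩ := (tendstoInMeasure_of_tendsto_Lp
    ((continuous_subtype_val.tendsto v).comp (huv.comp hns))).exists_seq_tendsto_ae
  refine ⟨φ, tendsto_integral_of_dominated_convergence (fun x => ‖f‖ * D x) (fun n => ?_)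
    (hD.const_mul _) (fun n => ?_) ?_⟩
  · exact f.continuous.aestronglyMeasurable.mul (measurable_outflow ha
      (Lp.stronglyMeasurable (u (ns (φ n))).1).measurable g).aestronglyMeasurable
  · filter_upwards [(u (ns (φ n))).2] with x hx
    rw [norm_mul]
    exact mul_le_mul (f.norm_coe_le_norm x) hx (norm_nonneg _) (norm_nonneg _)
  · filter_upwards [hφ] with x hx
    exact (((outflow (a x) g).continuous.tendsto _).comp hx).const_mul _

lemma isClosed_setOf_abs_outflow_le (a : Y → G → G → ℝ) (D : Y → ℝ) :
    IsClosed {v : EdgeL2 G m |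
      ∀ᵐ x ∂m, v x ∈ edgeFields (a x) ∧ ∀ g, |outflow (a x) g (v x)| ≤ D x} := by
  let C : Y → Set (EuclideanSpace ℝ (G × G)) := fun x =>
    edgeFields (a x) ∩ ⋂ g, {e | |outflow (a x) g e| ≤ D x}
  have isClosed_C : ∀ x, IsClosed (C x) := fun x =>
    (Submodule.closed_of_finiteDimensional _).inter
      (isClosed_iInter fun g => isClosed_le (outflow (a x) g).continuous.abs continuous_const)
  simpa only [C, Set.mem_inter_iff, Set.mem_iInter, SetLike.mem_coe, Set.mem_ofPred_eq]
    using isClosed_setOf_ae_mem (p := 2) isClosed_C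

variable [SigmaFinite m] [TopologicalSpace X] [TopologicalSpace Y] [BorelSpace X] [BorelSpace Y]

lemma isClosed_setOf_isAdmissible [OpensMeasurableSpace (X × Y)] [HasOuterApproxClosed X]
    [HasOuterApproxClosed Y] (ha : ∀ g g', Measurable fun x => a x g g')
    (hsymm : ∀ x g g', a x g g' = a x g' g) :
    IsClosed {x : (G → FiniteMeasure (X × Y)) × EdgeL2 G m |
      IsAdmissible m a α β x.1 x.2} := by
  let D : Y → ℝ := fun x => ((totalMass β : Measure Y).rnDeriv m x).toReal
  let dominated : Set (EdgeL2 G m) :=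
    {v | ∀ᵐ x ∂m, v x ∈ edgeFields (a x) ∧ ∀ g, |outflow (a x) g (v x)| ≤ D x}
  let defect (g : G) (f : Y →ᵇ ℝ) (x : (G → FiniteMeasure (X × Y)) × EdgeL2 G m) : ℝ :=
    ∫ y, f y ∂((x.1 g).map Prod.snd : Measure Y)
      - (∫ y, f y ∂(β g : Measure Y) + ∫ y, f y * outflow (a y) g (x.2 y) ∂m)
  have continuous_plan (g : G) : Continuous
      fun x : (G → FiniteMeasure (X × Y)) × EdgeL2 G m => x.1 g :=
    (continuous_apply g).comp continuous_fst
  have isClosed_plans : IsClosed (⋂ g, {x : (G → FiniteMeasure (X × Y)) ×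
      EdgeL2 G m | (x.1 g).map Prod.fst = α g}) :=
    isClosed_iInter fun g => isClosed_eq
      ((FiniteMeasure.continuous_map continuous_fst).comp (continuous_plan g)) continuous_const
  have isClosed_dominated : IsClosed (Prod.snd (α := G → FiniteMeasure (X × Y)) ⁻¹' dominated) :=
    (isClosed_setOf_abs_outflow_le a D).preimage continuous_snd
  have continuousOn_defect (g : G) (f : Y →ᵇ ℝ) :
      ContinuousOn (defect g f) (Prod.snd ⁻¹' dominated) := by
    refine ((FiniteMeasure.continuous_integral_boundedContinuousFunction f).comp
      ((FiniteMeasure.continuous_map continuous_snd).comp (continuous_plan g))).continuousOn.sub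
        (continuousOn_const.add ?_)
    refine (continuousOn_integral_mul_outflow ha g f (D := D)
      Measure.integrable_toReal_rnDeriv).comp continuous_snd.continuousOn
        fun x hx => Set.mem_ofPred.2 ?_
    filter_upwards [Set.mem_ofPred.1 hx] with y hy using hy.2 g
  have isClosed_balanced :
      IsClosed (⋂ g, ⋂ f, Prod.snd ⁻¹' dominated ∩ defect g f ⁻¹' {0}) :=
    isClosed_iInter fun g => isClosed_iInter fun f =>
      (continuousOn_defect g f).preimage_isClosed_of_isClosed isClosed_dominated isClosed_singleton
  convert isClosed_plans.inter (isClosed_dominated.inter isClosed_balanced) using 1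
  ext x
  simp only [Set.mem_ofPred_eq, isAdmissible_iff_weak ha hsymm, Set.mem_inter_iff, Set.mem_iInter,
    Set.mem_preimage, Set.mem_singleton_iff, defect, sub_eq_zero]
  exact ⟨fun ⟨h₁, h₂, h₃⟩ => ⟨h₁, h₂, fun g f => ⟨h₂, h₃ g f⟩⟩,
    fun ⟨h₁, h₂, h₃⟩ => ⟨h₁, h₂, fun g f => (h₃ g f).2⟩⟩

theorem exists_isMinOn_isAdmissible [PolishSpace X] [PolishSpace Y]
    (ha : ∀ g g', Measurable fun x => a x g g') (hsymm : ∀ x g g', a x g g' = a x g' g)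
    {T : (G → FiniteMeasure (X × Y)) → ℝ≥0∞} (hTlsc : LowerSemicontinuous T)
    (hTmid : ∀ γ₁ γ₂, T ((2⁻¹ : ℝ≥0) • (γ₁ + γ₂)) ≤ (T γ₁ + T γ₂) / 2)
    (hfin : ∃ γ v, IsAdmissible m a α β γ v ∧ T γ + ‖v‖ₑ ^ 2 < ⊤) :
    ∃ γ v, IsAdmissible m a α β γ v ∧
      ∀ γ' v', IsAdmissible m a α β γ' v' → T γ + ‖v‖ₑ ^ 2 ≤ T γ' + ‖v'‖ₑ ^ 2 := by
  obtain ⟨γ₀, v₀, hadm₀, hfin₀⟩ := hfin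
  obtain ⟨⟨γ, v⟩, hadm, hmin⟩ := exists_isMinOn_add_enorm_sq
    (isCompact_univ_pi fun g => isCompact_closure_plans (α g) (totalMass β)) hTlsc hTmid
    (isClosed_setOf_isAdmissible ha hsymm)
    (fun x hx g _ => subset_closure ⟨hx.map_fst g, hx.map_snd_le_totalMass ha hsymm g⟩)
    (fun x hx y hy => hx.midpoint hy ha) ⟨(γ₀, v₀), hadm₀, hfin₀⟩
  exact ⟨γ, v, hadm, fun γ' v' hadm' => hmin (a := (γ', v')) hadm'⟩

end Exchange

section SemidiscreteTransport

lemma enorm_Lp_two_sq {α E : Type*} [MeasurableSpace α] [NormedAddCommGroup E] {m : Measure α}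
    (v : Lp E 2 m) : ‖v‖ₑ ^ 2 = ∫⁻ x, ‖v x‖ₑ ^ 2 ∂m := by
  simpa [Lp.enorm_def] using eLpNorm_nnreal_pow_eq_lintegral (f := v) (μ := m) (p := 2) two_ne_zero

lemma memLp_two_iff_lintegral_lt_top {α E : Type*} [MeasurableSpace α] [NormedAddCommGroup E]
    {m : Measure α} {f : α → E} (hf : AEStronglyMeasurable f m) :
    MemLp f 2 m ↔ ∫⁻ x, ‖f x‖ₑ ^ 2 ∂m < ⊤ := by
  have hpow : eLpNorm f 2 m ^ 2 = ∫⁻ x, ‖f x‖ₑ ^ 2 ∂m := by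
    simpa using eLpNorm_nnreal_pow_eq_lintegral (f := f) (μ := m) (p := 2) two_ne_zero
  rw [← hpow, ENNReal.pow_lt_top_iff, or_iff_left two_ne_zero]
  exact ⟨fun h => h.2, fun h => ⟨hf, h⟩⟩

variable {d : ℕ} {G : Type*} {τ : ℝ} {W : Ed d → ℝ} {K : G → G → ℝ} {h : Ed d → G → G → ℝ}

/-- The weight `√(4 τ K e^{-W})` of the pair `(g, g')` at `x`, normalised so that the exchange part
of the cost becomes the squared `L²` norm of `weightedField`. -/
def edgeWeight (τ : ℝ) (W : Ed d → ℝ) (K : G → G → ℝ) (x : Ed d) (g g' : G) : ℝ :=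
  √(4 * τ * K g g' * Real.exp (-W x))

lemma edgeWeight_sq (hτ : 0 ≤ τ) (hK0 : ∀ g g', 0 ≤ K g g') (x : Ed d) (g g' : G) :
    edgeWeight τ W K x g g' ^ 2 = 4 * τ * K g g' * Real.exp (-W x) := by
  have := hK0 g g'
  exact Real.sq_sqrt (by positivity)

lemma edgeWeight_symm (hKsym : ∀ g g', K g g' = K g' g) (x : Ed d) (g g' : G) :
    edgeWeight τ W K x g g' = edgeWeight τ W K x g' g := by
  rw [edgeWeight, hKsym, edgeWeight]

lemma measurable_edgeWeight (hW : Measurable W) (g g' : G) :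
    Measurable fun x => edgeWeight τ W K x g g' := by
  unfold edgeWeight
  fun_prop

/-- The square integrable function that represents `h`. -/
def weightedField (τ : ℝ) (W : Ed d → ℝ) (K : G → G → ℝ) (h : Ed d → G → G → ℝ) (x : Ed d) :
    EuclideanSpace ℝ (G × G) :=
  WithLp.toLp 2 fun p => edgeWeight τ W K x p.1 p.2 / 4 * h x p.1 p.2

lemma measurable_weightedField (hW : Measurable W) (hh : ∀ g g', Measurable fun x => h x g g') :
    Measurable (weightedField τ W K h) :=
  (WithLp.measurable_toLp 2 _).comp (measurable_pi_iff.2 fun p =>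
    ((measurable_edgeWeight hW p.1 p.2).div_const 4).mul (hh p.1 p.2))

lemma weightedField_mem_edgeFields (hKsym : ∀ g g', K g g' = K g' g)
    (hanti : ∀ x g g', h x g g' = -h x g' g) (x : Ed d) :
    weightedField τ W K h x ∈ edgeFields (edgeWeight τ W K x) := by
  refine fun g g' => ⟨?_, fun hzero => ?_⟩
  · simp only [weightedField]
    rw [hanti, edgeWeight_symm hKsym, mul_neg]
  · simp only [weightedField, hzero, zero_div, zero_mul]

variable [Fintype G]

/-- The plan part of the cost; the sum over the second vertex only multiplies by the number of
vertices, as in `Cost`. -/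
def transportCost (τ : ℝ) (γ : G → Measure (Ed d × Ed d)) : ℝ≥0∞ :=
  ∑ g, ∑ _g' : G, ENNReal.ofReal (1 / (2 * τ)) * ∫⁻ p, ENNReal.ofReal (‖p.1 - p.2‖ ^ 2) ∂(γ g)

lemma lowerSemicontinuous_transportCost :
    LowerSemicontinuous fun γ : G → FiniteMeasure (Ed d × Ed d) =>
      transportCost τ fun g => (γ g : Measure (Ed d × Ed d)) := by
  have coe_nnnorm_sq (p : Ed d × Ed d) :
      ENNReal.ofReal (‖p.1 - p.2‖ ^ 2) = (‖p.1 - p.2‖₊ ^ 2 : ℝ≥0) := by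
    rw [← coe_nnnorm, ← NNReal.coe_pow, ENNReal.ofReal_coe_nnreal]
  simp only [transportCost, coe_nnnorm_sq]
  refine lowerSemicontinuous_sum fun g _ => lowerSemicontinuous_sum fun _ _ => ?_
  refine Continuous.comp_lowerSemicontinuous (ENNReal.continuous_const_mul ofReal_ne_top) ?_
    fun _ _ hst => mul_le_mul_right hst _
  have hcont : Continuous fun p : Ed d × Ed d => ‖p.1 - p.2‖₊ ^ 2 := by fun_prop
  exact (lowerSemicontinuous_lintegral_finiteMeasure hcont).comp (continuous_apply g)

lemma transportCost_midpoint (γ₁ γ₂ : G → FiniteMeasure (Ed d × Ed d)) :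
    transportCost τ (fun g => (((2⁻¹ : ℝ≥0) • (γ₁ + γ₂)) g : Measure (Ed d × Ed d)))
      = (transportCost τ (fun g => (γ₁ g : Measure (Ed d × Ed d)))
        + transportCost τ fun g => (γ₂ g : Measure (Ed d × Ed d))) / 2 := by
  simp only [transportCost, Pi.smul_apply, Pi.add_apply, FiniteMeasure.toMeasure_smul,
    FiniteMeasure.toMeasure_add, lintegral_smul_measure, lintegral_add_measure,
    ← Finset.sum_add_distrib, ← mul_add, ENNReal.div_eq_inv_mul, Finset.mul_sum]
  refine Finset.sum_congr rfl fun g _ => Finset.sum_congr rfl fun _ _ => ?_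
  rw [ENNReal.smul_def, smul_eq_mul, ENNReal.coe_inv two_ne_zero, ENNReal.coe_ofNat, mul_left_comm]

lemma outflow_weightedField (hτ : 0 ≤ τ) (hK0 : ∀ g g', 0 ≤ K g g') (x : Ed d) (g : G) :
    outflow (edgeWeight τ W K x) g (weightedField τ W K h x)
      = τ * ((∑ g', h x g g' * K g g') * Real.exp (-W x)) := by
  rw [outflow_apply, Finset.sum_mul, Finset.mul_sum]
  refine Finset.sum_congr rfl fun g' _ => ?_
  simp only [weightedField]
  linear_combination h x g g' / 4 * edgeWeight_sq (W := W) hτ hK0 x g g'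

lemma enorm_weightedField_sq (hτ : 0 ≤ τ) (hK0 : ∀ g g', 0 ≤ K g g') (x : Ed d) :
    ‖weightedField τ W K h x‖ₑ ^ 2 = ∑ g, ∑ g',
      ENNReal.ofReal (τ / 4) * ENNReal.ofReal (h x g g' ^ 2 * K g g' * Real.exp (-W x)) := by
  rw [← ofReal_norm, ← ENNReal.ofReal_pow (norm_nonneg _), EuclideanSpace.real_norm_sq_eq,
    ENNReal.ofReal_sum_of_nonneg fun _ _ => sq_nonneg _, Fintype.sum_prod_type]
  refine Finset.sum_congr rfl fun g _ => Finset.sum_congr rfl fun g' _ => ?_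
  rw [← ENNReal.ofReal_mul (by positivity)]
  congr 1
  simp only [weightedField]
  linear_combination h x g g' ^ 2 / 16 * edgeWeight_sq (W := W) hτ hK0 x g g'

lemma lintegral_enorm_weightedField_sq (hτ : 0 ≤ τ) (hW : Measurable W)
    (hK0 : ∀ g g', 0 ≤ K g g') (hh : ∀ g g', Measurable fun x => h x g g') :
    ∫⁻ x, ‖weightedField τ W K h x‖ₑ ^ 2 = ∑ g, ∑ g',
      ENNReal.ofReal (τ / 4) * ∫⁻ x, ENNReal.ofReal (h x g g' ^ 2 * K g g' * Real.exp (-W x)) := by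
  have hmeas (g g' : G) : Measurable fun x =>
      ENNReal.ofReal (h x g g' ^ 2 * K g g' * Real.exp (-W x)) :=
    ((((hh g g').pow_const 2).mul_const _).mul (by fun_prop)).ennreal_ofReal
  simp_rw [enorm_weightedField_sq hτ hK0]
  rw [lintegral_finsetSum _ fun g _ => Finset.measurable_sum _ fun g' _ =>
    (hmeas g g').const_mul _]
  refine Finset.sum_congr rfl fun g _ => ?_
  rw [lintegral_finsetSum _ fun g' _ => (hmeas g g').const_mul _]
  exact Finset.sum_congr rfl fun g' _ => lintegral_const_mul _ (hmeas g g')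

lemma memLp_weightedField_iff (hτ : 0 < τ) (hW : Measurable W) (hK0 : ∀ g g', 0 ≤ K g g')
    (hh : ∀ g g', Measurable fun x => h x g g') :
    MemLp (weightedField τ W K h) 2 ↔
      ∑ g, ∑ g', ∫⁻ x, ENNReal.ofReal (h x g g' ^ 2 * Real.exp (-W x) * K g g') < ⊤ := by
  rw [memLp_two_iff_lintegral_lt_top (measurable_weightedField hW hh).aestronglyMeasurable,
    lintegral_enorm_weightedField_sq hτ.le hW hK0 hh]
  simp_rw [mul_right_comm _ (Real.exp _), ← Finset.mul_sum]
  have hconst : ENNReal.ofReal (τ / 4) ≠ 0 := (ENNReal.ofReal_pos.2 (by positivity)).ne'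
  rw [lt_top_iff_ne_top, lt_top_iff_ne_top, Ne, ENNReal.mul_eq_top]
  simp [hconst]

lemma cost_eq_transportCost_add [MeasurableSpace G] (hτ : 0 < τ) (hW : Measurable W)
    (hK0 : ∀ g g', 0 ≤ K g g') (hh : ∀ g g', Measurable fun x => h x g g')
    {γ : G → Measure (Ed d × Ed d)} {v : EdgeL2 G (volume : Measure (Ed d))}
    (hv : v =ᵐ[volume] weightedField τ W K h) :
    Cost τ W K γ h = transportCost τ γ + ‖v‖ₑ ^ 2 := by
  rw [enorm_Lp_two_sq, lintegral_congr_ae (hv.mono fun x hx => congrArg (‖·‖ₑ ^ 2) hx),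
    lintegral_enorm_weightedField_sq hτ.le hW hK0 hh]
  simp only [Cost, transportCost, Finset.sum_add_distrib]

/- Where the weight vanishes the quotient defining `h` is `0`, and so is `v`. -/
lemma exists_ae_eq_weightedField (hW : Measurable W) (hKsym : ∀ g g', K g g' = K g' g)
    {v : EdgeL2 G (volume : Measure (Ed d))}
    (hv : ∀ᵐ x, v x ∈ edgeFields (edgeWeight τ W K x)) :
    ∃ h : Ed d → G → G → ℝ, (∀ g g', Measurable fun x => h x g g') ∧
      (∀ x g g', h x g g' = -h x g' g) ∧ v =ᵐ[volume] weightedField τ W K h := by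
  refine ⟨fun x g g' => 2 * (v x (g, g') - v x (g', g)) / edgeWeight τ W K x g g',
    fun g g' => ?_, fun x g g' => ?_, ?_⟩
  · have := (Lp.stronglyMeasurable v).measurable
    exact Measurable.div (by fun_prop) (measurable_edgeWeight hW g g')
  · beta_reduce
    rw [edgeWeight_symm hKsym]
    ring
  · filter_upwards [hv] with x hx
    ext ⟨g, g'⟩
    simp only [weightedField]
    by_cases hzero : edgeWeight τ W K x g g' = 0
    · rw [(hx g g').2 hzero, hzero, zero_div, zero_mul]
    · rw [(hx g' g).1]
      field_simp
      ring

variable [MeasurableSpace G] {μ σ : Measure (Ed d × G)}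

instance [IsFiniteMeasure μ] (g : G) : IsFiniteMeasure (fiber μ g) := by
  unfold fiber
  infer_instance

/-- The fibre `μ_g` as a finite measure, the form in which marginals enter `IsAdmissible`. -/
def finiteFiber (μ : Measure (Ed d × G)) [IsFiniteMeasure μ] (g : G) : FiniteMeasure (Ed d) :=
  ⟨fiber μ g, inferInstance⟩

lemma inADM_iff_isAdmissible [IsFiniteMeasure μ] [IsFiniteMeasure σ] (hτ : 0 < τ)
    (hW : Measurable W) (hK0 : ∀ g g', 0 ≤ K g g') (hKsym : ∀ g g', K g g' = K g' g)
    (hh : ∀ g g', Measurable fun x => h x g g') (hanti : ∀ x g g', h x g g' = -h x g' g)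
    {γ : G → FiniteMeasure (Ed d × Ed d)} {v : EdgeL2 G (volume : Measure (Ed d))}
    (hv : v =ᵐ[volume] weightedField τ W K h) :
    InADM τ W K μ σ (fun g => γ g) h ↔
      IsAdmissible volume (edgeWeight τ W K) (finiteFiber μ) (finiteFiber σ) γ v := by
  have hflux (g : G) (A : Set (Ed d)) : ∫ x in A, outflow (edgeWeight τ W K x) g (v x)
      = τ * ∫ x in A, (∑ g', h x g g' * K g g') * Real.exp (-W x) := by
    rw [← integral_const_mul]
    refine integral_congr_ae (ae_restrict_of_ae (hv.mono fun x hx => ?_))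
    simp only [hx, outflow_weightedField hτ.le hK0]
  have hsq := (memLp_weightedField_iff hτ hW hK0 hh).1 ((memLp_congr_ae hv).1 (Lp.memLp v))
  have hmem : ∀ᵐ x, v x ∈ edgeFields (edgeWeight τ W K x) :=
    hv.mono fun x hx => hx ▸ weightedField_mem_edgeFields hKsym hanti x
  refine ⟨fun ⟨hfst, _, _, _, hbal⟩ => ⟨fun g => Subtype.ext ?_, hmem, fun g A hA => ?_⟩,
    fun hadm => ⟨fun g => ?_, hh, hanti, hsq, fun g A hA => ?_⟩⟩
  · exact hfst g
  · rw [hflux]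
    exact hbal g A hA
  · exact congrArg Subtype.val (hadm.map_fst g)
  · rw [← hflux]
    exact hadm.balance g A hA

lemma InADM.exists_isAdmissible [IsFiniteMeasure μ] [IsFiniteMeasure σ] (hτ : 0 < τ)
    (hW : Measurable W) (hK0 : ∀ g g', 0 ≤ K g g') (hKsym : ∀ g g', K g g' = K g' g)
    {γ : G → Measure (Ed d × Ed d)} (hadm : InADM τ W K μ σ γ h) :
    ∃ (γ' : G → FiniteMeasure (Ed d × Ed d)) (v : EdgeL2 G (volume : Measure (Ed d))),
      IsAdmissible volume (edgeWeight τ W K) (finiteFiber μ) (finiteFiber σ) γ' v ∧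
        Cost τ W K γ h = transportCost τ (fun g => (γ' g : Measure (Ed d × Ed d))) + ‖v‖ₑ ^ 2 := by
  have ⟨hfst, hh, hanti, hsq, _⟩ := hadm
  have hfinite (g : G) : IsFiniteMeasure (γ g) :=
    have : IsFiniteMeasure ((γ g).map Prod.fst) := hfst g ▸ inferInstance
    Measure.isFiniteMeasure_of_map measurable_fst.aemeasurable
  have hLp := (memLp_weightedField_iff hτ hW hK0 hh).2 hsq
  exact ⟨fun g => ⟨γ g, hfinite g⟩, hLp.toLp,
    (inADM_iff_isAdmissible hτ hW hK0 hKsym hh hanti hLp.coeFn_toLp).1 hadm,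
    cost_eq_transportCost_add hτ hW hK0 hh hLp.coeFn_toLp⟩

lemma IsAdmissible.exists_inADM [IsFiniteMeasure μ] [IsFiniteMeasure σ] (hτ : 0 < τ)
    (hW : Measurable W) (hK0 : ∀ g g', 0 ≤ K g g') (hKsym : ∀ g g', K g g' = K g' g)
    {γ : G → FiniteMeasure (Ed d × Ed d)} {v : EdgeL2 G (volume : Measure (Ed d))}
    (hadm : IsAdmissible volume (edgeWeight τ W K) (finiteFiber μ) (finiteFiber σ) γ v) :
    ∃ h, InADM τ W K μ σ (fun g => γ g) h ∧ Cost τ W K (fun g => γ g) h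
      = transportCost τ (fun g => (γ g : Measure (Ed d × Ed d))) + ‖v‖ₑ ^ 2 := by
  obtain ⟨h, hh, hanti, hv⟩ := exists_ae_eq_weightedField hW hKsym hadm.mem_edgeFields
  exact ⟨h, (inADM_iff_isAdmissible hτ hW hK0 hKsym hh hanti hv).2 hadm,
    cost_eq_transportCost_add hτ hW hK0 hh hv⟩

end SemidiscreteTransport

theorem exists_optimal_pair_general {d : ℕ} {G : Type*} [Fintype G] [MeasurableSpace G]
    (τ : ℝ) (hτ : 0 < τ) (W : Ed d → ℝ) (hW : Measurable W) (K : G → G → ℝ)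
    (hK0 : ∀ g g', 0 ≤ K g g') (hKsym : ∀ g g', K g g' = K g' g)
    (μ σ : Measure (Ed d × G)) [IsFiniteMeasure μ] [IsFiniteMeasure σ]
    (hfin : ACost τ W K μ σ < ⊤) :
    ∃ (γ : G → Measure (Ed d × Ed d)) (h : Ed d → G → G → ℝ), InOpt τ W K μ σ γ h := by
  simp only [ACost, iInf_lt_iff] at hfin
  obtain ⟨γ₀, h₀, hadm₀, hcost₀⟩ := hfin
  obtain ⟨γ₁, v₁, hadm₁, hcost₁⟩ := hadm₀.exists_isAdmissible hτ hW hK0 hKsym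
  obtain ⟨γ, v, hadm, hmin⟩ := exists_isMinOn_isAdmissible (measurable_edgeWeight hW)
    (edgeWeight_symm hKsym) lowerSemicontinuous_transportCost
    (fun γ₁ γ₂ => (transportCost_midpoint γ₁ γ₂).le) ⟨γ₁, v₁, hadm₁, hcost₁ ▸ hcost₀⟩
  obtain ⟨h, hopt, hcost⟩ := hadm.exists_inADM hτ hW hK0 hKsym
  refine ⟨fun g => γ g, h, hopt, le_antisymm ?_ (iInf₂_le_of_le _ _ (iInf_le _ hopt))⟩
  refine le_iInf₂ fun γ' h' => le_iInf fun hadm' => ?_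
  obtain ⟨γ₂, v₂, hadm₂, hcost₂⟩ := hadm'.exists_isAdmissible hτ hW hK0 hKsym
  rw [hcost, hcost₂]
  exact hmin γ₂ v₂ hadm₂

end

/-- **Existence of optimal pairs** for the static semi-discrete transport problem:
if `A^{G,W,τ}(μ,σ) < ∞` then the infimum defining it is attained by some admissible pair. -/
theorem exists_optimal_pair {d : ℕ} {G : Type*} [Fintype G] [MeasurableSpace G]
    [MeasurableSingletonClass G]
    (τ : ℝ) (hτ : 0 < τ) (W : Ed d → ℝ) (hW : Measurable W) (K : G → G → ℝ)
    (hK0 : ∀ g g', 0 ≤ K g g') (hKsym : ∀ g g', K g g' = K g' g)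
    (hconn : ∀ g g' : G, Relation.ReflTransGen (fun a b => 0 < K a b) g g')
    (μ σ : Measure (Ed d × G)) (hμ : μ ∈ P2 d G) (hσ : σ ∈ P2 d G)
    (hfin : ACost τ W K μ σ < ⊤) :
    ∃ (γ : G → Measure (Ed d × Ed d)) (h : Ed d → G → G → ℝ),
      InOpt τ W K μ σ γ h := by
  have := hμ.1
  have := hσ.1
  exact exists_optimal_pair_general τ hτ W hW K hK0 hKsym μ σ hfin
end

section
/- Let μ, σ ∈ P_2(ℝ^d × G) be absolutely continuous with respect to dx⊗dg and assume the density f̃ of σ satisfies Σ_g ∫ |f̃(x,g)|² e^{W(x)} dx < ∞. Then A^{G,W,τ}(μ,σ) < ∞. -/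
/-!
Mass is first sent to the correct spatial distribution, and then redistributed along the graph.

Let `s = Σ_g σ_g` be the spatial marginal of `σ` and `a_g = μ_g(ℝ^d)`, so that `Σ_g a_g = 1`. The
product plans `γ_g = μ_g ⊗ s` have first marginals `μ_g`, second marginals `a_g s`, and finite
quadratic cost because `μ` and `σ` have finite second moments. The balance condition then asks for
an antisymmetric `h` with
`Σ_{g'} h_{gg'}(x) K(g,g') = (e^{W(x)} / τ) (a_g Σ_v f̃(x,v) - f̃(x,g))`.
Since `(G, K)` is connected, every function on `G` with zero sum is the divergence of an
antisymmetric flow; pick flows `c^v` with divergence `a - δ_v`. Then `h = (e^W / τ) Σ_v f̃(·,v) c^v`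
solves the equation, and `h e^{-W/2}` is a linear combination of the functions `f̃(·,v) e^{W/2}`,
which are square integrable by hypothesis.
-/

open MeasureTheory ENNReal Filter
open scoped RealInnerProductSpace Classical

open MeasureTheory ENNReal

section GraphFlow

section Ring

variable {R G : Type*} [Ring R]

/-- The antisymmetric flows `H` on `G`; `H g g'` is the amount transported along `(g, g')`, before
the weight of that edge is taken into account. -/
def skewFlows (R G : Type*) [Ring R] : Submodule R (G → G → R) where
  carrier := {H | ∀ g g', H g g' = -H g' g}
  zero_mem' := by simp
  add_mem' {H H'} hH hH' g g' := by simp only [Pi.add_apply, hH g g', hH' g g', neg_add]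
  smul_mem' r H hH g g' := by simp only [Pi.smul_apply, hH g g', smul_neg]

lemma single_single_sub_single_single_mem_skewFlows [DecidableEq G] (u v : G) (r : R) :
    Pi.single u (Pi.single v r) - Pi.single v (Pi.single u r) ∈ skewFlows R G := by
  intro g g'
  simp only [Pi.sub_apply, Pi.single_apply, Pi.zero_apply, ite_apply]
  split_ifs <;> simp

end Ring

section Semiring

variable {R G : Type*} [Semiring R] [Fintype G]

/-- The divergence `g ↦ Σ_{g'} H g g' * K g g'` of a flow `H` on a graph with edge weights `K`. It
is the net outflow from `g` when `H` is antisymmetric and `K` symmetric. -/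
def flowDiv (K : G → G → R) : (G → G → R) →ₗ[R] G → R where
  toFun H g := ∑ g', H g g' * K g g'
  map_add' H H' := by ext g; simp [add_mul, Finset.sum_add_distrib]
  map_smul' r H := by ext g; simp [Finset.mul_sum, mul_assoc]

lemma flowDiv_apply (K H : G → G → R) (g : G) : flowDiv K H g = ∑ g', H g g' * K g g' := rfl

lemma flowDiv_single_single [DecidableEq G] (K : G → G → R) (u v : G) (r : R) :
    flowDiv K (Pi.single u (Pi.single v r)) = Pi.single u (r * K u v) := by
  ext g
  obtain rfl | hg := eq_or_ne g u <;> simp [flowDiv_apply, Pi.single_apply, *]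

end Semiring

variable {R G : Type*} [DivisionRing R] [Fintype G] {K : G → G → R}

lemma single_sub_single_mem_map_flowDiv_of_ne_zero [DecidableEq G] {u v : G}
    (hsymm : K u v = K v u) (huv : K u v ≠ 0) :
    Pi.single u 1 - Pi.single v 1 ∈ (skewFlows R G).map (flowDiv K) := by
  refine ⟨_, single_single_sub_single_single_mem_skewFlows u v (K u v)⁻¹, ?_⟩
  simp [flowDiv_single_single, ← hsymm, huv]

lemma single_sub_single_mem_map_flowDiv_of_reflTransGen [DecidableEq G]
    (hK : ∀ g g', K g g' = K g' g) {u v : G}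
    (huv : Relation.ReflTransGen (fun g g' => K g g' ≠ 0) u v) :
    Pi.single u 1 - Pi.single v 1 ∈ (skewFlows R G).map (flowDiv K) := by
  induction huv with
  | refl => simp
  | @tail v w _ hvw ih =>
    rw [← sub_add_sub_cancel _ (Pi.single v 1)]
    exact add_mem ih (single_sub_single_mem_map_flowDiv_of_ne_zero (hK v w) hvw)

lemma mem_map_flowDiv_of_sum_eq_zero (hK : ∀ g g', K g g' = K g' g)
    (hconn : ∀ u v, Relation.ReflTransGen (fun g g' => K g g' ≠ 0) u v)
    {ρ : G → R} (hρ : ∑ g, ρ g = 0) :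
    ρ ∈ (skewFlows R G).map (flowDiv K) := by
  classical
  obtain _ | ⟨⟨v⟩⟩ := isEmpty_or_nonempty G
  · simp [Subsingleton.elim ρ 0]
  have hρ_eq : ρ = ∑ u, ρ u • (Pi.single u 1 - Pi.single v 1) := by
    simp only [smul_sub, Finset.sum_sub_distrib, ← Finset.sum_smul, hρ, zero_smul, sub_zero]
    exact pi_eq_sum_univ' ρ
  rw [hρ_eq]
  exact sum_mem fun u _ => Submodule.smul_mem _ _
    (single_sub_single_mem_map_flowDiv_of_reflTransGen hK (hconn u v))

end GraphFlow

section SquareIntegrable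

variable {α E : Type*} [MeasurableSpace α] {ν : Measure α} [NormedAddCommGroup E]

lemma memLp_two_iff_lintegral_sq_norm_lt_top {f : α → E} (hf : AEStronglyMeasurable f ν) :
    MemLp f 2 ν ↔ ∫⁻ x, ENNReal.ofReal (‖f x‖ ^ 2) ∂ν < ⊤ := by
  rw [memLp_two_iff_integrable_sq_norm hf, lt_top_iff_ne_top]
  exact (lintegral_ofReal_ne_top_iff_integrable (hf.norm.pow 2)
    (.of_forall fun _ => sq_nonneg _)).symm

lemma memLp_two_mul_exp_half_iff {f W : α → ℝ} (hf : Measurable f) (hW : Measurable W) :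
    MemLp (fun x => f x * Real.exp (W x / 2)) 2 ν ↔
      ∫⁻ x, ENNReal.ofReal (f x ^ 2 * Real.exp (W x)) ∂ν < ⊤ := by
  rw [memLp_two_iff_lintegral_sq_norm_lt_top (by fun_prop)]
  simp [mul_pow, ← Real.exp_nat_mul, mul_div_cancel₀]

lemma lintegral_sq_norm_sub_prod_lt_top [MeasurableSpace E] [BorelSpace E]
    [SecondCountableTopology E] {ν s : Measure E} [IsFiniteMeasure ν] [IsFiniteMeasure s]
    (hν : ∫⁻ x, ENNReal.ofReal (‖x‖ ^ 2) ∂ν < ⊤) (hs : ∫⁻ x, ENNReal.ofReal (‖x‖ ^ 2) ∂s < ⊤) :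
    ∫⁻ p : E × E, ENNReal.ofReal (‖p.1 - p.2‖ ^ 2) ∂(ν.prod s) < ⊤ := by
  have hν2 : MemLp id 2 ν := (memLp_two_iff_lintegral_sq_norm_lt_top (by fun_prop)).2 hν
  have hs2 : MemLp id 2 s := (memLp_two_iff_lintegral_sq_norm_lt_top (by fun_prop)).2 hs
  exact (memLp_two_iff_lintegral_sq_norm_lt_top (by fun_prop)).1
    ((hν2.comp_fst s).sub (hs2.comp_snd ν))

end SquareIntegrable

section RebalancingFlow

variable {α G : Type*} [Fintype G] {τ : ℝ} {W : α → ℝ} {f : α → G → ℝ} {c : G → G → G → ℝ}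

/-- The flow `(e^{W(x)} / τ) Σ_v f(x,v) c^v` at a point `x`. If `c^v` moves a unit mass distributed
according to `a` to the vertex `v`, then `Σ_v f(x,v) c^v` moves the mass `Σ_v f(x,v)`, distributed
according to `a`, to `f(x,·)`. The prefactor cancels the weight `τ e^{-W}` of the balance
condition. -/
noncomputable def rebalancingFlow (τ : ℝ) (W : α → ℝ) (f : α → G → ℝ) (c : G → G → G → ℝ)
    (x : α) : G → G → ℝ :=
  (Real.exp (W x) / τ) • ∑ v, f x v • c v

lemma rebalancingFlow_apply (x : α) (g g' : G) :
    rebalancingFlow τ W f c x g g' = Real.exp (W x) / τ * ∑ v, f x v * c v g g' := by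
  simp [rebalancingFlow, Finset.sum_apply]

lemma rebalancingFlow_mem_skewFlows (hc : ∀ v, c v ∈ skewFlows ℝ G) (x : α) :
    rebalancingFlow τ W f c x ∈ skewFlows ℝ G :=
  Submodule.smul_mem _ _ (sum_mem fun v _ => Submodule.smul_mem _ _ (hc v))

lemma flowDiv_rebalancingFlow [DecidableEq G] {K : G → G → ℝ} {a : G → ℝ}
    (hc : ∀ v, flowDiv K (c v) = a - Pi.single v 1) (x : α) :
    flowDiv K (rebalancingFlow τ W f c x) = (Real.exp (W x) / τ) • ((∑ v, f x v) • a - f x) := by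
  simp [rebalancingFlow, hc, smul_sub, Finset.sum_smul, ← Pi.single_smul',
    Finset.univ_sum_single]

variable [MeasurableSpace α]

lemma measurable_rebalancingFlow (hW : Measurable W) (hf : ∀ v, Measurable fun x => f x v)
    (g g' : G) : Measurable fun x => rebalancingFlow τ W f c x g g' := by
  simp only [rebalancingFlow_apply]
  fun_prop

lemma memLp_rebalancingFlow_mul_exp {ν : Measure α} {p : ℝ≥0∞}
    (hf : ∀ v, MemLp (fun x => f x v * Real.exp (W x / 2)) p ν) (g g' : G) :
    MemLp (fun x => rebalancingFlow τ W f c x g g' * Real.exp (-W x / 2)) p ν := by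
  have hexp : ∀ x, Real.exp (W x) * Real.exp (-W x / 2) = Real.exp (W x / 2) := fun x => by
    rw [← Real.exp_add]
    ring_nf
  have hflow : (fun x => rebalancingFlow τ W f c x g g' * Real.exp (-W x / 2)) =
      fun x => ∑ v, c v g g' / τ * (f x v * Real.exp (W x / 2)) := by
    ext x
    simp only [rebalancingFlow_apply, ← hexp, Finset.mul_sum, Finset.sum_mul]
    exact Finset.sum_congr rfl fun v _ => by ring
  rw [hflow]
  exact memLp_finsetSum _ fun v _ => (hf v).const_mul _

lemma lintegral_sq_rebalancingFlow_lt_top {ν : Measure α} (hW : Measurable W)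
    (hf : ∀ v, Measurable fun x => f x v)
    (hL2W : ∑ v, ∫⁻ x, ENNReal.ofReal (f x v ^ 2 * Real.exp (W x)) ∂ν < ⊤) (g g' : G) :
    ∫⁻ x, ENNReal.ofReal (rebalancingFlow τ W f c x g g' ^ 2 * Real.exp (-W x)) ∂ν < ⊤ :=
  (memLp_two_mul_exp_half_iff (measurable_rebalancingFlow hW hf g g') hW.neg).1
    (memLp_rebalancingFlow_mul_exp (fun v => (memLp_two_mul_exp_half_iff (hf v) hW).2
      (ENNReal.sum_lt_top.1 hL2W v (Finset.mem_univ v))) g g')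

end RebalancingFlow

section Fiber

variable {d : ℕ} {G : Type*} [MeasurableSpace G] (μ : Measure (Ed d × G))

instance isFiniteMeasure_fiber [IsFiniteMeasure μ] (g : G) : IsFiniteMeasure (fiber μ g) := by
  unfold fiber
  infer_instance

lemma lintegral_fiber_le (g : G) {f : Ed d → ℝ≥0∞} (hf : Measurable f) :
    ∫⁻ x, f x ∂(fiber μ g) ≤ ∫⁻ p, f p.1 ∂μ := by
  rw [fiber, lintegral_map hf measurable_fst]
  exact setLIntegral_le_lintegral _ _

variable [MeasurableSingletonClass G]

lemma sum_fiber [Countable G] : Measure.sum (fiber μ) = μ.fst := by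
  have hdisj : Pairwise (Function.onFun Disjoint fun g : G => {p : Ed d × G | p.2 = g}) :=
    pairwise_disjoint_fiber Prod.snd
  have hunion : ⋃ g : G, {p : Ed d × G | p.2 = g} = Set.univ := by
    ext
    simp
  have hsum : Measure.sum (fun g => μ.restrict {p | p.2 = g}) = μ := by
    rw [← Measure.restrict_iUnion hdisj fun g => measurable_snd (measurableSet_singleton g),
      hunion, Measure.restrict_univ]
  calc Measure.sum (fiber μ)
      = (Measure.sum fun g => μ.restrict {p | p.2 = g}).map Prod.fst :=
        (Measure.map_sum measurable_fst.aemeasurable).symm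
    _ = μ.fst := by rw [hsum, Measure.fst]

lemma sum_fiber_real_apply [Fintype G] [IsFiniteMeasure μ] (A : Set (Ed d)) :
    ∑ g, (fiber μ g).real A = μ.fst.real A := by
  simp only [measureReal_def]
  rw [← sum_fiber μ, Measure.sum_fintype, Measure.finsetSum_apply,
    ENNReal.toReal_sum fun _ _ => measure_ne_top _ _]

end Fiber

namespace HasDens

variable {d : ℕ} {G : Type*} [Fintype G] [MeasurableSpace G] {σ : Measure (Ed d × G)}
  {f : Ed d → G → ℝ}

lemma measurable_section (hf : HasDens σ f) (g : G) : Measurable fun x => f x g :=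
  hf.2.1.comp measurable_prodMk_right

variable [MeasurableSingletonClass G]

lemma fiber_apply (hf : HasDens σ f) (g : G) {A : Set (Ed d)} (hA : MeasurableSet A) :
    fiber σ g A = ∫⁻ x in A, ENNReal.ofReal (f x g) := by
  have hm : Measurable fun p : Ed d × G => ENNReal.ofReal (f p.1 p.2) := hf.2.1.ennreal_ofReal
  have hprod : Prod.fst ⁻¹' A ∩ {p : Ed d × G | p.2 = g} = A ×ˢ {g} := rfl
  rw [fiber, Measure.map_apply measurable_fst hA, Measure.restrict_apply (measurable_fst hA),
    hprod, hf.2.2, withDensity_apply _ (hA.prod (measurableSet_singleton g)), refM,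
    ← Measure.prod_restrict, Measure.restrict_singleton, Measure.count_singleton, one_smul,
    lintegral_prod _ hm.aemeasurable]
  simp

lemma fiber_real_apply (hf : HasDens σ f) (g : G) {A : Set (Ed d)} (hA : MeasurableSet A) :
    (fiber σ g).real A = ∫ x in A, f x g := by
  rw [measureReal_def, hf.fiber_apply g hA, integral_eq_lintegral_of_nonneg_ae
    (.of_forall fun x => hf.1 x g) (hf.measurable_section g).aestronglyMeasurable]

lemma integrable_section [IsFiniteMeasure σ] (hf : HasDens σ f) (g : G) :
    Integrable fun x => f x g := by
  rw [← lintegral_ofReal_ne_top_iff_integrable (hf.measurable_section g).aestronglyMeasurable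
    (.of_forall fun x => hf.1 x g), ← setLIntegral_univ, ← hf.fiber_apply g .univ]
  exact measure_ne_top _ _

lemma fst_real_apply [IsFiniteMeasure σ] (hf : HasDens σ f) {A : Set (Ed d)}
    (hA : MeasurableSet A) : σ.fst.real A = ∫ x in A, ∑ g, f x g := by
  rw [← sum_fiber_real_apply,
    integral_finsetSum _ fun g _ => (hf.integrable_section g).integrableOn]
  exact Finset.sum_congr rfl fun g _ => hf.fiber_real_apply g hA

end HasDens

section TransportCost

variable {d : ℕ} {G : Type*} [Fintype G] [MeasurableSpace G] {τ : ℝ} {W : Ed d → ℝ}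
  {K : G → G → ℝ} {μ σ : Measure (Ed d × G)}

lemma InADM.acost_lt_top {γ : G → Measure (Ed d × Ed d)} {h : Ed d → G → G → ℝ}
    (hadm : InADM τ W K μ σ γ h)
    (hγ : ∀ g, ∫⁻ p, ENNReal.ofReal (‖p.1 - p.2‖ ^ 2) ∂(γ g) < ⊤) :
    ACost τ W K μ σ < ⊤ := by
  have hle : ACost τ W K μ σ ≤ Cost τ W K γ h := iInf_le_of_le γ (iInf₂_le h hadm)
  refine hle.trans_lt (ENNReal.sum_lt_top.2 fun g _ => ENNReal.sum_lt_top.2 fun g' _ =>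
    ENNReal.add_lt_top.2 ⟨ENNReal.mul_lt_top ENNReal.ofReal_lt_top (hγ g),
      ENNReal.mul_lt_top ENNReal.ofReal_lt_top ?_⟩)
  simpa only [mul_right_comm] using
    ENNReal.sum_lt_top.1 (ENNReal.sum_lt_top.1 hadm.2.2.2.1 g (Finset.mem_univ g)) g'
      (Finset.mem_univ g')

variable [MeasurableSingletonClass G] [DecidableEq G] {f : Ed d → G → ℝ} {c : G → G → G → ℝ}

lemma HasDens.mul_setIntegral_flowDiv_rebalancingFlow [IsFiniteMeasure σ] (hf : HasDens σ f)
    (hτ : τ ≠ 0) {a : G → ℝ} (hc : ∀ v, flowDiv K (c v) = a - Pi.single v 1) (g : G)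
    {A : Set (Ed d)} (hA : MeasurableSet A) :
    τ * ∫ x in A, flowDiv K (rebalancingFlow τ W f c x) g * Real.exp (-W x) =
      a g * σ.fst.real A - (fiber σ g).real A := by
  have hdiv : ∀ x, flowDiv K (rebalancingFlow τ W f c x) g * Real.exp (-W x) =
      τ⁻¹ * (a g * ∑ v, f x v - f x g) := fun x => by
    rw [flowDiv_rebalancingFlow hc, Real.exp_neg]
    simp only [Pi.smul_apply, Pi.sub_apply, smul_eq_mul]
    field_simp
  have hint : ∀ v, IntegrableOn (fun x => f x v) A := fun v =>
    (hf.integrable_section v).integrableOn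
  simp only [hdiv]
  rw [integral_const_mul, mul_inv_cancel_left₀ hτ,
    integral_sub ((integrable_finsetSum _ fun v _ => hint v).const_mul _) (hint g),
    integral_const_mul, ← hf.fst_real_apply hA, ← hf.fiber_real_apply g hA]

lemma HasDens.inADM_prod_rebalancingFlow [IsFiniteMeasure μ] [IsProbabilityMeasure σ]
    (hf : HasDens σ f) (hτ : τ ≠ 0) (hW : Measurable W) (hK : ∀ g g', 0 ≤ K g g')
    (hL2W : ∑ v, ∫⁻ x, ENNReal.ofReal (f x v ^ 2 * Real.exp (W x)) < ⊤)
    (hskew : ∀ v, c v ∈ skewFlows ℝ G)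
    (hdiv : ∀ v, flowDiv K (c v) = (fun g => (fiber μ g).real Set.univ) - Pi.single v 1) :
    InADM τ W K μ σ (fun g => (fiber μ g).prod σ.fst) (rebalancingFlow τ W f c) := by
  refine ⟨fun g => Measure.fst_prod, measurable_rebalancingFlow hW hf.measurable_section,
    rebalancingFlow_mem_skewFlows hskew, ?_, fun g A hA => ?_⟩
  · refine ENNReal.sum_lt_top.2 fun g _ => ENNReal.sum_lt_top.2 fun g' _ => ?_
    simp only [ENNReal.ofReal_mul' (hK g g')]
    rw [lintegral_mul_const' _ _ ENNReal.ofReal_ne_top]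
    exact ENNReal.mul_lt_top
      (lintegral_sq_rebalancingFlow_lt_top hW hf.measurable_section hL2W g g')
      ENNReal.ofReal_lt_top
  · have hbal := hf.mul_setIntegral_flowDiv_rebalancingFlow (W := W) hτ hdiv g hA
    simp only [flowDiv_apply, measureReal_def] at hbal
    rw [hbal, Measure.map_snd_prod, Measure.smul_apply, smul_eq_mul, ENNReal.toReal_mul]
    ring

end TransportCost

theorem acost_finite_of_L2W_general {d : ℕ} {G : Type*} [Fintype G] [MeasurableSpace G]
    [MeasurableSingletonClass G]
    (τ : ℝ) (hτ : 0 < τ) (W : Ed d → ℝ) (hW : Measurable W) (K : G → G → ℝ)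
    (hK0 : ∀ g g', 0 ≤ K g g') (hKsym : ∀ g g', K g g' = K g' g)
    (hconn : ∀ g g' : G, Relation.ReflTransGen (fun a b => 0 < K a b) g g')
    (μ σ : Measure (Ed d × G)) (hμ : μ ∈ P2 d G) (hσ : σ ∈ P2 d G)
    (f : Ed d → G → ℝ) (hf : HasDens σ f)
    (hL2W : ∑ g, ∫⁻ x, ENNReal.ofReal ((f x g) ^ 2 * Real.exp (W x)) < ⊤) :
    ACost τ W K μ σ < ⊤ := by
  have : IsProbabilityMeasure μ := hμ.1
  have : IsProbabilityMeasure σ := hσ.1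
  have hconn' : ∀ u v, Relation.ReflTransGen (fun g g' => K g g' ≠ 0) u v := fun u v =>
    Relation.ReflTransGen.mono (fun _ _ => ne_of_gt) u v (hconn u v)
  have hflow : ∀ v, (fun g => (fiber μ g).real Set.univ) - Pi.single v 1 ∈
      (skewFlows ℝ G).map (flowDiv K) := fun v =>
    mem_map_flowDiv_of_sum_eq_zero hKsym hconn' (by simp [sum_fiber_real_apply])
  choose c hskew hdiv using hflow
  have hmeas : Measurable fun x : Ed d => ENNReal.ofReal (‖x‖ ^ 2) := by fun_prop
  have hmomμ : ∀ g, ∫⁻ x, ENNReal.ofReal (‖x‖ ^ 2) ∂(fiber μ g) < ⊤ := fun g =>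
    (lintegral_fiber_le μ g hmeas).trans_lt hμ.2
  have hmomσ : ∫⁻ x, ENNReal.ofReal (‖x‖ ^ 2) ∂σ.fst < ⊤ := by
    rw [Measure.fst, lintegral_map hmeas measurable_fst]
    exact hσ.2
  exact (hf.inADM_prod_rebalancingFlow hτ.ne' hW hK0 hL2W hskew hdiv).acost_lt_top fun g =>
    lintegral_sq_norm_sub_prod_lt_top (hmomμ g) hmomσ

/-- If `μ, σ ∈ P_2(ℝ^d × G)` are absolutely continuous with respect to `dx ⊗ dg` and the
density `f̃` of `σ` satisfies `Σ_g ∫ |f̃(x,g)|² e^{W(x)} dx < ∞`, then the static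
semi-discrete transport cost `A^{G,W,τ}(μ,σ)` is finite. -/
theorem acost_finite_of_L2W {d : ℕ} {G : Type*} [Fintype G] [MeasurableSpace G]
    [MeasurableSingletonClass G]
    (τ : ℝ) (hτ : 0 < τ) (W : Ed d → ℝ) (hW : Measurable W) (K : G → G → ℝ)
    (hK0 : ∀ g g', 0 ≤ K g g') (hKsym : ∀ g g', K g g' = K g' g)
    (hconn : ∀ g g' : G, Relation.ReflTransGen (fun a b => 0 < K a b) g g')
    (μ σ : Measure (Ed d × G)) (hμ : μ ∈ P2 d G) (hσ : σ ∈ P2 d G)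
    (hμac : μ ≪ refM d G)
    (ftilde : Ed d → G → ℝ) (hσdens : HasDens σ ftilde)
    (hL2W : ∑ g, ∫⁻ x, ENNReal.ofReal ((ftilde x g) ^ 2 * Real.exp (W x)) < ⊤) :
    ACost τ W K μ σ < ⊤ :=
  acost_finite_of_L2W_general τ hτ W hW K hK0 hKsym hconn μ σ hμ hσ ftilde hσdens hL2W
end
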